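/- arXiv:0912.2152 — 2 statements merged into one kernel-verified Lean document; each statement's English description precedes it below -/
import Mathlib

section
/- Let k be a field, d an even integer with d ≥ 4, and m an integer with d+1 < m; set a = (d+2)/2. In R = k[x_1,…,x_m,z] let I = I_{a,1,m−1} + I_{a,2,m} and J = I_{a−1,2,m−1} + z·I_{a−2,3,m−2}, and let J̄ denote the image of J in R/I, an ideal of R/I regarded as an R/I-module. Then: (1) there exists a unique R/I-linear map φ : J̄ → R/I such that φ(v + I) = 0 for every v ∈ I_{a−1,2,m−1} and φ(zw + I) = x_1x_m·w + I for every w ∈ I_{a−2,3,m−2}; and (2) the R/I-module Hom_{R/I}(J̄, R/I) is generated by the inclusion map ι : J̄ → R/I together with φ. -/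
set_option synthInstance.maxHeartbeats 1000000
set_option maxHeartbeats 1000000

/-- The variable `x_t` (1-indexed, for `1 ≤ t ≤ n`) of the polynomial ring
`k[x_1, …, x_n]`, realized as `MvPolynomial (Fin n) k`. -/
noncomputable def Xv (k : Type*) [Field k] (n t : ℕ) : MvPolynomial (Fin n) k :=
  if h : 1 ≤ t ∧ t ≤ n then MvPolynomial.X ⟨t - 1, by omega⟩ else 0

/-- The ideal `I_{a,p,q}` of `k[x_1, …, x_n]`, generated by the squarefree monomials
`x_{t_1} ⋯ x_{t_a}` with `p ≤ t_1 < t_2 < ⋯ < t_a ≤ q` and `t_{j+1} ≥ t_j + 2`. -/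
noncomputable def idealI (k : Type*) [Field k] (n a p q : ℕ) :
    Ideal (MvPolynomial (Fin n) k) :=
  Ideal.span { f | ∃ t : ℕ → ℕ, p ≤ t 0 ∧ t (a - 1) ≤ q ∧
    (∀ j, j + 1 < a → t j + 2 ≤ t (j + 1)) ∧
    f = ∏ j ∈ Finset.range a, Xv k n (t j) }


def Sp (b : ℕ) (t : ℕ → ℕ) : Prop := ∀ j, j + 1 < b → t j + 2 ≤ t (j + 1)

def InS (X : Set ℕ) (b p q : ℕ) (t : ℕ → ℕ) : Prop :=
  Sp b t ∧ p ≤ t 0 ∧ t (b - 1) ≤ q ∧ ∀ j < b, t j ∈ X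

def Gn (b p q : ℕ) (t : ℕ → ℕ) : Prop := Sp b t ∧ p ≤ t 0 ∧ t (b - 1) ≤ q

def im (b : ℕ) (t : ℕ → ℕ) : Set ℕ := {x | ∃ j < b, x = t j}

def Bad (X : Set ℕ) (b p q : ℕ) : Prop :=
  (∃ t, InS X b p (q - 1) t) ∨ ∃ t, InS X b (p + 1) q t

theorem Bad.mono {X Y : Set ℕ} {b p q : ℕ} (h : X ⊆ Y) (hb : Bad X b p q) : Bad Y b p q := by
  rcases hb with ⟨t, h1, h2, h3, h4⟩ | ⟨t, h1, h2, h3, h4⟩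
  · exact Or.inl ⟨t, h1, h2, h3, fun j hj => h (h4 j hj)⟩
  · exact Or.inr ⟨t, h1, h2, h3, fun j hj => h (h4 j hj)⟩

theorem Sp.le {b : ℕ} {t : ℕ → ℕ} (h : Sp b t) : ∀ i j, i ≤ j → j < b → t i + 2 * (j - i) ≤ t j := by
  intro i j hij
  induction j, hij using Nat.le_induction with
  | base => intro _; simp
  | succ j hij ih =>
    intro hj
    have := ih (by omega)
    have := h j hj
    omega

theorem Gn.bd {b p q : ℕ} {t : ℕ → ℕ} (h : Gn b p q t) (j : ℕ) (hj : j < b) : p ≤ t j ∧ t j ≤ q := by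
  have h1 := h.1.le 0 j (by omega) hj
  have h2 := h.1.le j (b-1) (by omega) (by omega)
  have := h.2.1
  have := h.2.2
  omega

theorem InS.gn {X : Set ℕ} {b p q : ℕ} {t : ℕ → ℕ} (h : InS X b p q t) : Gn b p q t :=
  ⟨h.1, h.2.1, h.2.2.1⟩

/-- splice: first `i` terms of `s`, then `w` from index `l`. -/
theorem splice {X : Set ℕ} {b p q c d : ℕ} (s w : ℕ → ℕ) (i l : ℕ)
    (hs : Sp c s) (hw : Sp d w) (hi : i ≤ c) (hl : b + l ≤ d + i) (hib : i < b)
    (hj : ∀ x, i = x + 1 → s x + 2 ≤ w l)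
    (hp : (0 < i → p ≤ s 0) ∧ (i = 0 → p ≤ w l))
    (hq : ∀ x, x + 1 = b + l - i → w x ≤ q)
    (hsX : ∀ x < i, s x ∈ X) (hwX : ∀ x, l ≤ x → x < d → w x ∈ X) :
    InS X b p q (fun x => if x < i then s x else w (x + l - i)) := by
  refine ⟨?_, ?_, ?_, ?_⟩
  · intro j hjb
    by_cases h1 : j + 1 < i
    · have : j < i := by omega
      simp only [h1, this, if_true]
      exact hs j (by omega)
    · by_cases h2 : j < i
      · simp only [h1, h2, if_true, if_false]
        have := hj j (by omega)
        rwa [show j + 1 + l - i = l by omega]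
      · simp only [h1, h2, if_false]
        have := hw (j + l - i) (by omega)
        rwa [show j + 1 + l - i = j + l - i + 1 by omega]
  · by_cases h : 0 < i
    · simpa [h] using hp.1 h
    · obtain rfl : i = 0 := by omega
      simpa using hp.2 rfl
  · have : ¬ (b - 1 < i) := by omega
    simp only [this, if_false]
    exact hq _ (by omega)
  · intro j hjb
    by_cases h2 : j < i
    · simp only [h2, if_true]; exact hsX _ h2
    · simp only [h2, if_false]; exact hwX _ (by omega) (by omega)

theorem shift_step {F : Set ℕ} {c p q : ℕ} {s s' : ℕ → ℕ} (hs : Gn c (p+1) (q-1) s)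
    (hs' : Gn c (p+1) (q-1) s')
    (ha : ¬ Bad (F ∪ im c s) (c+1) p q) (ha' : ¬ Bad (F ∪ im c s') (c+1) p q)
    (j : ℕ) (hj : j < c) (hlt : s' j < s j) (hsh : ∀ x, j = x + 1 → s x + 3 ≤ s j)
    (hmax : ∀ i, j < i → i < c → s (i-1) + 3 ≤ s i → s i ≤ s' i) :
    ¬ Bad (F ∪ im c s ∪ {s j - 1}) (c+1) p q := by
  intro hB
  have hsb := hs.bd
  have hsb' := hs'.bd
  have hW : ∃ w, Sp (c+1) w ∧ (∀ i < c+1, p ≤ w i ∧ w i ≤ q) ∧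
      (∀ i < c+1, w i ∈ F ∪ im c s ∪ {s j - 1}) := by
    rcases hB with ⟨w, h⟩ | ⟨w, h⟩
    · exact ⟨w, h.1, fun i hi => by have := h.gn.bd i hi; omega, h.2.2.2⟩
    · exact ⟨w, h.1, fun i hi => by have := h.gn.bd i hi; omega, h.2.2.2⟩
  have hv : ∃ k < c+1, ∃ w, Sp (c+1) w ∧ (∀ i < c+1, p ≤ w i ∧ w i ≤ q) ∧
      (∀ i < c+1, w i ∈ F ∪ im c s ∪ {s j - 1}) ∧ w k = s j - 1 := by
    by_contra hno
    push Not at hno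
    apply ha
    have key : ∀ w, Sp (c+1) w → (∀ i < c+1, p ≤ w i ∧ w i ≤ q) →
      (∀ i < c+1, w i ∈ F ∪ im c s ∪ {s j - 1}) → ∀ i < c+1, w i ∈ F ∪ im c s := by
      intro w h1 h2 h3 i hi
      rcases h3 i hi with h | h
      · exact h
      · exact absurd h (hno i hi w h1 h2 h3)
    rcases hB with ⟨w, h⟩ | ⟨w, h⟩
    · exact Or.inl ⟨w, h.1, h.2.1, h.2.2.1, key w h.1 (fun i hi => by have := h.gn.bd i hi; omega) h.2.2.2⟩
    · exact Or.inr ⟨w, h.1, h.2.1, h.2.2.1, key w h.1 (fun i hi => by have := h.gn.bd i hi; omega) h.2.2.2⟩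
  obtain ⟨k, hk, w, hw, hwb, hwX, hwk⟩ := hv
  have hsp := hs.1
  have hsp' := hs'.1
  have hb0 := hsb j hj
  have hwgt : ∀ i, k < i → i < c+1 → s j + 1 ≤ w i := by
    intro i h1 h2
    have := hw.le k i h1.le h2
    omega
  have hwne : ∀ i < c+1, i ≠ k → w i ∈ F ∪ im c s := by
    intro i hi hik
    rcases hwX i hi with h | h
    · exact h
    · exfalso
      have h : w i = s j - 1 := h
      rcases lt_or_gt_of_ne hik with h1 | h1
      · have := hw.le i k h1.le hk; omega
      · have := hw.le k i h1.le hi; omega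
  have hsm : ∀ x < c, s x ∈ F ∪ im c s := fun x hx => Or.inr ⟨x, hx, rfl⟩
  have hsm' : ∀ x < c, s' x ∈ F ∪ im c s' := fun x hx => Or.inr ⟨x, hx, rfl⟩
  have hkj : k = j := by
    rcases lt_trichotomy k j with h | h | h
    · exfalso
      refine ha (Or.inr ⟨_, splice (b := c+1) (c := c) (d := c+1) s w j (k+1) hsp hw (by omega) (by omega) (by omega) ?_ ?_ ?_ ?_ ?_⟩)
      · intro x hx
        have := hwgt (k+1) (by omega) (by omega)
        have := hsh x hx
        omega
      · exact ⟨fun _ => hs.2.1, fun h => by omega⟩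
      · intro x hx; exact (hwb x (by omega)).2
      · intro x hx; exact hsm x (by omega)
      · intro x h1 h2; exact hwne x h2 (by omega)
    · exact h
    · exfalso
      refine ha (Or.inl ⟨_, splice (b := c+1) (c := c+1) (d := c) w s k j hw hsp (by omega) (by omega) (by omega) ?_ ?_ ?_ ?_ ?_⟩)
      · intro x hx
        have := hw x (by omega)
        rw [← hx] at this
        omega
      · exact ⟨fun _ => (hwb 0 (by omega)).1, fun h => by omega⟩
      · intro x hx; exact (hsb x (by omega)).2
      · intro x hx; exact hwne x (by omega) (by omega)
      · intro x h1 h2; exact hsm x h2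
  subst hkj
  -- elements of w beyond are in F while large
  have hF : ∀ y, k < y → y < c + 1 → s (y-1) + 1 ≤ w y → w y ∈ F := by
    intro y hy1 hy2 hy3
    rcases hwne y hy2 (by omega) with h | ⟨l, hl, h⟩
    · exact h
    · exfalso
      have hly : y ≤ l := by
        by_contra hcon
        have := hsp.le l (y-1) (by omega) (by omega)
        omega
      refine ha (Or.inr ⟨_, splice (b := c+1) (c := c) (d := c+1) s w (l+1) (y+1) hsp hw (by omega) (by omega) (by omega) ?_ ?_ ?_ ?_ ?_⟩)
      · intro x hx
        obtain rfl : x = l := by omega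
        have := hw y (by omega)
        omega
      · exact ⟨fun _ => hs.2.1, fun h => by omega⟩
      · intro x hx; exact (hwb x (by omega)).2
      · intro x hx; exact hsm x (by omega)
      · intro x h1 h2; exact hwne x h2 (by omega)
  have hjn : s' k + 2 ≤ w (k+1) := by
    have := hwgt (k+1) (by omega) (by omega)
    omega
  by_cases hx : ∃ x, k < x ∧ x < c ∧ w (x+1) ≤ s x
  · classical
    let x := Nat.find hx
    obtain ⟨h1, h2, h3⟩ := Nat.find_spec hx
    have hmin : ∀ y, k < y → y < x → s y + 1 ≤ w (y+1) := by
      intro y hy1 hy2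
      have := Nat.find_min hx hy2
      push Not at this
      have := this hy1 (by have : x < c := h2; omega)
      omega
    change k < x at h1
    change x < c at h2
    change w (x+1) ≤ s x at h3
    have hge : ∀ y, k < y → y ≤ x → s (y-1) + 1 ≤ w y := by
      intro y hy1 hy2
      by_cases hy : y = k + 1
      · subst hy; simpa using hwgt (k+1) (by omega) (by omega)
      · have := hmin (y-1) (by omega) (by omega)
        rwa [show y - 1 + 1 = y by omega] at this
    have hsx : s x ≤ s' x := by
      apply hmax x h1 h2
      have := hge x h1 le_rfl
      have := hw x (by omega)
      omega
    have hA := splice (X := F ∪ im c s') (b := x+1) (p := p+1) (q := q) (c := c) (d := x+1) s' w (k+1) (k+1) hsp'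
      (fun i hi => hw i (by omega)) (by omega) (by omega) (by omega) (by
        intro y hy; obtain rfl : y = k := by omega
        exact hjn) ⟨fun _ => hs'.2.1, fun h => by omega⟩ (fun y hy => (hwb y (by omega)).2)
        (fun y hy => hsm' y (by omega)) (fun y h1 h2 => Or.inl (hF y (by omega) (by omega) (hge y (by omega) (by omega))))
    refine ha' (Or.inl ⟨_, splice (b := c+1) (c := x+1) (d := c) _ s' (x+1) x hA.1 hsp' le_rfl (by omega) (by omega) ?_ ?_ ?_ ?_ ?_⟩)
    · intro y hy
      obtain rfl : x = y := by omega
      have : ¬ (x < k+1) := by omega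
      simp only [this, if_false, Nat.add_sub_cancel]
      have := hw x (by omega)
      omega
    · refine ⟨fun _ => ?_, fun h => by omega⟩
      have h9 := hA.2.1
      exact le_trans (Nat.le_succ p) h9
    · intro y hy; exact (hsb' y (by omega)).2
    · intro y hy; exact hA.2.2.2 y hy
    · intro y h1 h2; exact hsm' y h2
  · push Not at hx
    have hge : ∀ y, k < y → y < c + 1 → s (y-1) + 1 ≤ w y := by
      intro y hy1 hy2
      by_cases hy : y = k + 1
      · subst hy; simpa using hwgt (k+1) (by omega) (by omega)
      · have := hx (y-1) (by omega) (by omega)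
        rw [show y - 1 + 1 = y by omega] at this
        omega
    refine ha' (Or.inr ⟨_, splice (b := c+1) (c := c) (d := c+1) s' w (k+1) (k+1) hsp' hw (by omega) (by omega) (by omega) ?_ ?_ ?_ ?_ ?_⟩)
    · intro y hy; obtain rfl : y = k := by omega
      exact hjn
    · exact ⟨fun _ => hs'.2.1, fun h => by omega⟩
    · intro x hx; exact (hwb x (by omega)).2
    · intro x hx; exact hsm' x (by omega)
    · intro x h1 h2; exact Or.inl (hF x (by omega) (by omega) (hge x (by omega) (by omega)))

theorem connected {K : Type*} {F : Set ℕ} {c p q : ℕ} (f : (ℕ → ℕ) → K)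
    (hadj : ∀ s s', Gn c (p+1) (q-1) s → Gn c (p+1) (q-1) s' →
      ¬ Bad (F ∪ (im c s ∪ im c s')) (c+1) p q → f s = f s') :
    ∀ s s', Gn c (p+1) (q-1) s → Gn c (p+1) (q-1) s' →
      ¬ Bad (F ∪ im c s) (c+1) p q → ¬ Bad (F ∪ im c s') (c+1) p q → f s = f s' := by
  have main : ∀ N s s', Gn c (p+1) (q-1) s → Gn c (p+1) (q-1) s' →
      ¬ Bad (F ∪ im c s) (c+1) p q → ¬ Bad (F ∪ im c s') (c+1) p q →
      ∑ j ∈ Finset.range c, s j + ∑ j ∈ Finset.range c, s' j = N → f s = f s' := by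
    intro N
    induction N using Nat.strong_induction_on with
    | _ N ih =>
    -- one-sided step
    have one : ∀ s s', Gn c (p+1) (q-1) s → Gn c (p+1) (q-1) s' →
      ¬ Bad (F ∪ im c s) (c+1) p q → ¬ Bad (F ∪ im c s') (c+1) p q →
      ∑ j ∈ Finset.range c, s j + ∑ j ∈ Finset.range c, s' j = N → (∃ j < c, s' j < s j) → f s = f s' := by
      intro s s' hs hs' ha ha' hN hex
      have hP : ∃ j, j < c ∧ s' j < s j ∧ (∀ x, j = x + 1 → s x + 3 ≤ s j) := by
        classical
        obtain ⟨h1, h2⟩ := Nat.find_spec hex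
        refine ⟨Nat.find hex, h1, h2, ?_⟩
        intro x hx
        have := Nat.find_min hex (m := x) (by omega)
        push Not at this
        have := this (by omega)
        have := hs'.1 x (by omega)
        rw [← hx] at this
        omega
      obtain ⟨j, ⟨hj, hlt, hsh⟩, hmax⟩ : ∃ j, (j < c ∧ s' j < s j ∧ (∀ x, j = x + 1 → s x + 3 ≤ s j)) ∧
          ∀ i, j < i → i < c → s (i-1) + 3 ≤ s i → s i ≤ s' i := by
        classical
        obtain ⟨j0, hj0⟩ := hP
        let P : ℕ → Prop := fun j => j < c ∧ s' j < s j ∧ (∀ x, j = x + 1 → s x + 3 ≤ s j)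
        refine ⟨Nat.findGreatest P c, Nat.findGreatest_spec (P := P) hj0.1.le hj0, ?_⟩
        intro i h1 h2 h3
        have := Nat.findGreatest_is_greatest h1 h2.le
        by_contra hcon
        exact this ⟨h2, by omega, fun x hx => by subst hx; simpa using h3⟩
      have hstep := shift_step hs hs' ha ha' j hj hlt hsh hmax
      have hsb := hs.bd
      have hsb' := hs'.bd j hj
      let s1 : ℕ → ℕ := Function.update s j (s j - 1)
      have e1 : s1 j = s j - 1 := by simp [s1]
      have e2 : ∀ i, i ≠ j → s1 i = s i := fun i hi => by simp [s1, hi]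
      have hs1sp : Sp c s1 := by
        intro i hi
        have := hs.1 i hi
        by_cases h1 : i = j
        · subst h1; rw [e1, e2 _ (by omega)]; omega
        · by_cases h2 : i + 1 = j
          · have := hsh i h2.symm
            rw [h2, e1, e2 _ h1]; omega
          · rw [e2 _ h1, e2 _ h2]; omega
      have hs1 : Gn c (p+1) (q-1) s1 := by
        refine ⟨hs1sp, ?_, ?_⟩
        · by_cases h : 0 = j
          · rw [h, e1]; omega
          · rw [e2 _ h]; exact hs.2.1
        · have := hsb (c-1) (by omega)
          by_cases h : c - 1 = j
          · rw [h, e1]; rw [h] at this; omega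
          · rw [e2 _ h]; omega
      have hsub : F ∪ (im c s ∪ im c s1) ⊆ F ∪ im c s ∪ {s j - 1} := by
        rintro x (h | h | ⟨i, hi, rfl⟩)
        · exact Or.inl (Or.inl h)
        · exact Or.inl (Or.inr h)
        · by_cases h : i = j
          · subst h; exact Or.inr e1
          · exact Or.inl (Or.inr ⟨i, hi, e2 i h⟩)
      have h1 : f s = f s1 := hadj s s1 hs hs1 (fun h => hstep (h.mono hsub))
      have h2 : ¬ Bad (F ∪ im c s1) (c+1) p q := fun h => hstep ((h.mono (by
        intro x hx
        rcases hx with hx | hx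
        · exact Or.inl hx
        · exact Or.inr (Or.inr hx))).mono hsub)
      have hlt' : ∑ j ∈ Finset.range c, s1 j < ∑ j ∈ Finset.range c, s j := by
        apply Finset.sum_lt_sum
        · intro i _
          by_cases h : i = j
          · rw [h, e1]; omega
          · rw [e2 i h]
        · exact ⟨j, Finset.mem_range.2 hj, by rw [e1]; omega⟩
      rw [h1]
      exact ih _ (by omega) s1 s' hs1 hs' h2 ha' rfl
    intro s s' hs hs' ha ha' hN
    by_cases h1 : ∃ j < c, s' j < s j
    · exact one s s' hs hs' ha ha' hN h1
    by_cases h2 : ∃ j < c, s j < s' j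
    · exact (one s' s hs' hs ha' ha (by omega) h2).symm
    push Not at h1 h2
    apply hadj s s' hs hs'
    intro h
    apply ha
    apply h.mono
    rintro x (h | h | ⟨i, hi, rfl⟩)
    · exact Or.inl h
    · exact Or.inr h
    · exact Or.inr ⟨i, hi, le_antisymm (h2 i hi) (h1 i hi)⟩
  intro s s' hs hs' ha ha'
  exact main _ s s' hs hs' ha ha' rfl

theorem pairs (len : ℕ) : ∀ (c p : ℕ) (Y : ℕ → Prop), 2 * c ≤ len →
    (¬ ∃ t : ℕ → ℕ, Sp (c+1) t ∧ ∀ j < c+1, p ≤ t j ∧ t j < p + len ∧ Y (t j)) →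
    ∃ g : ℕ → ℕ, Sp c g ∧ (∀ j < c, p ≤ g j ∧ g j + 1 < p + len) ∧
      ∀ y, p ≤ y → y < p + len → Y y → ∃ j < c, y = g j ∨ y = g j + 1 := by
  induction len using Nat.strong_induction_on with
  | _ len ih =>
  intro c p Y hc hno
  rcases c with _ | c
  · refine ⟨fun _ => 0, fun j hj => by omega, fun j hj => by omega, ?_⟩
    intro y h1 h2 h3
    exact absurd ⟨fun _ => y, fun j hj => by omega, fun j _ => ⟨h1, h2, h3⟩⟩ hno
  · by_cases hl : len = 2 * (c+1)
    · refine ⟨fun j => p + 2 * j, fun j hj => by dsimp only; omega, fun j hj => by dsimp only; omega, ?_⟩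
      intro y h1 h2 _
      refine ⟨(y - p) / 2, by omega, by dsimp only; omega⟩
    · by_cases hp : Y p
      · obtain ⟨g, hg, hgb, hgc⟩ := ih (len - 2) (by omega) c (p+2) Y (by omega) (by
          rintro ⟨t, ht, htb⟩
          apply hno
          refine ⟨fun j => if j = 0 then p else t (j-1), ?_, ?_⟩
          · intro j hj
            rcases j with _ | j
            · have := htb 0 (by omega)
              simp; omega
            · have := ht j (by omega)
              simpa using this
          · intro j hj
            rcases j with _ | j
            · simp [hp]; omega
            · have := htb j (by omega)
              simp only [Nat.add_eq_zero_iff, one_ne_zero, and_false, if_false, Nat.add_sub_cancel]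
              exact ⟨by omega, by omega, this.2.2⟩)
        refine ⟨fun j => if j = 0 then p else g (j-1), ?_, ?_, ?_⟩
        · intro j hj
          rcases j with _ | j
          · have := hgb 0 (by omega)
            simp; omega
          · have := hg j (by omega)
            simpa using this
        · intro j hj
          rcases j with _ | j
          · simp; omega
          · have := hgb j (by omega)
            simp; omega
        · intro y h1 h2 h3
          by_cases h4 : y < p + 2
          · exact ⟨0, by omega, by simp; omega⟩
          · obtain ⟨j, hj, h⟩ := hgc y (by omega) (by omega) h3
            exact ⟨j+1, by omega, by simpa using h⟩
      · obtain ⟨g, hg, hgb, hgc⟩ := ih (len - 1) (by omega) (c+1) (p+1) Y (by omega) (by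
          rintro ⟨t, ht, htb⟩
          apply hno
          refine ⟨t, ht, fun j hj => ?_⟩
          have := htb j hj
          exact ⟨by omega, by omega, this.2.2⟩)
        refine ⟨g, hg, fun j hj => ?_, ?_⟩
        · have := hgb j hj
          omega
        · intro y h1 h2 h3
          by_cases h4 : y = p
          · exact absurd (h4 ▸ h3) hp
          · exact hgc y (by omega) (by omega) h3

theorem pigeon {Z : Set ℕ} {c m : ℕ} (u u' : ℕ → ℕ)
    (hu : ∀ j < c, u' j = u j + 1 ∨ (u j = m ∧ u' j = 1))
    (hZ : ∀ x ∈ Z, ∃ j < c, x = u j ∨ x = u' j) : ¬ Bad Z (c+1) 1 m := by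
  have key : ∀ w, Sp (c+1) w → (∀ i < c+1, w i ∈ Z) → w c ≤ m → 1 ≤ w 0 →
      (w 0 = 1 ∧ w c = m) := by
    intro w hw hwZ hm h0
    choose! f hf1 hf2 using fun i (hi : i < c+1) => hZ _ (hwZ i hi)
    obtain ⟨i, hi, i', hi', hne, he⟩ := Finset.exists_ne_map_eq_of_card_lt_of_maps_to
      (s := Finset.range (c+1)) (t := Finset.range c) (by simp) (f := f)
      (fun i hi => by simpa using hf1 i (by simpa using hi))
    simp only [Finset.mem_range] at hi hi'
    wlog hlt : i < i' generalizing i i'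
    · exact this i' i hne.symm he.symm hi' hi (by omega)
    have h1 := hf2 i hi
    have h2 := hf2 i' hi'
    have h3 := hu (f i) (hf1 i hi)
    rw [← he] at h2
    have h4 := hw.le i i' hlt.le hi'
    have h5 := hw.le 0 i (by omega) hi
    have h6 := hw.le i' c (by omega) (by omega)
    omega
  rintro (⟨w, h1, h2, h3, h4⟩ | ⟨w, h1, h2, h3, h4⟩)
  · simp only [Nat.add_sub_cancel] at h3
    have h5 := h1.le 0 c (by omega) (by omega)
    have := key w h1 h4 (by omega) h2
    omega
  · simp only [Nat.add_sub_cancel] at h3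
    have := key w h1 h4 h3 (by omega)
    omega

theorem cutidx (t : ℕ → ℕ) (c M : ℕ) (ht : Sp c t) : ∃ r ≤ c, (∀ i < r, t i ≤ M) ∧ ∀ i, r ≤ i → i < c → M < t i := by
  classical
  have hex : ∃ r, r = c ∨ M < t r := ⟨c, Or.inl rfl⟩
  have hle : Nat.find hex ≤ c := Nat.find_min' hex (Or.inl rfl)
  refine ⟨Nat.find hex, hle, ?_, ?_⟩
  · intro i hi
    have := Nat.find_min hex hi
    push Not at this
    exact this.2
  · intro i h1 h2
    have h3 := ht.le _ i h1 h2
    have := Nat.find_spec hex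
    omega

theorem facet {X : Set ℕ} {c m n : ℕ} (hc : 2 ≤ c) (hm : 2 * c + 1 ≤ m) (hX : ¬ Bad X (c+1) 1 m)
    (hX1 : ∀ x ∈ X, 1 ≤ x ∧ x ≤ m)
    (hn : 1 ≤ n ∧ n ≤ m) (hnX : n ∉ X) :
    (∃ s, Gn c 2 (m-1) s ∧ n ∉ im c s ∧ ¬ Bad (X ∪ im c s) (c+1) 1 m) ∨
    (1 < n ∧ n < m ∧ ∃ s, Gn (c-1) 3 (m-2) s ∧ n ∉ im (c-1) s ∧ ¬ Bad (X ∪ im (c-1) s) (c+1) 1 m) := by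
  let rot : ℕ → ℕ := fun y => if y ≤ m - n then n + y else y - (m - n)
  have rot1 : ∀ y, y ≤ m - n → rot y = n + y := fun y h => by simp [rot, h]
  have rot2 : ∀ y, m - n < y → rot y = y - (m - n) := fun y h => by simp [rot, h]
  obtain ⟨g, hg, hgb, hgc⟩ := pairs (m-1) c 1 (fun y => rot y ∈ X) (by omega) (by
    rintro ⟨t, ht, htb⟩
    apply hX
    obtain ⟨r, hr, hr1, hr2⟩ := cutidx t (c+1) (m-n) ht
    let W : ℕ → ℕ := fun i => if i < c + 1 - r then t (i + r) - (m - n) else t (i - (c+1-r)) + n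
    have W1 : ∀ i, i < c + 1 - r → W i = t (i + r) - (m - n) := fun i h => by simp [W, h]
    have W2 : ∀ i, c + 1 - r ≤ i → W i = t (i - (c+1-r)) + n := fun i h => by
      have : ¬ (i < c + 1 - r) := by omega
      simp only [W, this, if_false]
    have hWsp : Sp (c+1) W := by
      intro j hj
      by_cases h1 : j + 1 < c + 1 - r
      · rw [W1 _ h1, W1 _ (by omega)]
        have := ht (j + r) (by omega)
        have := hr2 (j+r) (by omega) (by omega)
        rw [show j + 1 + r = j + r + 1 by omega]
        omega
      · by_cases h2 : j < c + 1 - r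
        · rw [W1 _ h2, W2 _ (by omega)]
          have := htb (j + r) (by omega)
          have := htb (j + 1 - (c + 1 - r)) (by omega)
          omega
        · rw [W2 _ (by omega), W2 _ (by omega)]
          have := ht (j - (c+1-r)) (by omega)
          rw [show j + 1 - (c+1-r) = j - (c+1-r) + 1 by omega]
          omega
    have hWX : ∀ j < c+1, W j ∈ X := by
      intro j hj
      by_cases h2 : j < c + 1 - r
      · rw [W1 _ h2]
        have := (htb (j + r) (by omega)).2.2
        rwa [rot2 _ (hr2 _ (by omega) (by omega))] at this
      · rw [W2 _ (by omega)]
        have := (htb (j - (c+1-r)) (by omega)).2.2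
        rwa [rot1 _ (hr1 _ (by omega)), add_comm] at this
    have hb0 := hX1 _ (hWX 0 (by omega))
    have hbc := hX1 _ (hWX c (by omega))
    by_cases hlast : W c ≤ m - 1
    · exact Or.inl ⟨W, hWsp, hb0.1, hlast, hWX⟩
    · refine Or.inr ⟨W, hWsp, ?_, hbc.2, hWX⟩
      by_cases h : r = c + 1
      · rw [W2 0 (by omega)]
        have := htb (0 - (c+1-r)) (by omega)
        omega
      · rw [W1 0 (by omega), zero_add]
        by_cases h0 : r = 0
        · have h1 := W1 c (by omega)
          have := htb (c + r) (by omega)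
          omega
        · have h1 := W2 c (by omega)
          rw [show c - (c+1-r) = r - 1 by omega] at h1
          have := ht (r-1) (by omega)
          rw [show r - 1 + 1 = r by omega] at this
          omega)
  obtain ⟨r, hr, hr1, hr2⟩ := cutidx g c (m-n) hg
  let S : ℕ → ℕ := fun i => if i < c - r then g (i + r) + 1 - (m - n) else g (i - (c-r)) + n
  have S1 : ∀ i, i < c - r → S i = g (i + r) + 1 - (m - n) := fun i h => by simp [S, h]
  have S2 : ∀ i, c - r ≤ i → S i = g (i - (c-r)) + n := fun i h => by
    have : ¬ (i < c - r) := by omega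
    simp only [S, this, if_false]
  have hSsp : Sp c S := by
    intro j hj
    by_cases h1 : j + 1 < c - r
    · rw [S1 _ h1, S1 _ (by omega)]
      have := hg (j + r) (by omega)
      have := hr2 (j+r) (by omega) (by omega)
      rw [show j + 1 + r = j + r + 1 by omega]
      omega
    · by_cases h2 : j < c - r
      · rw [S1 _ h2, S2 _ (by omega)]
        have := hgb (j + r) (by omega)
        have := hgb (j + 1 - (c - r)) (by omega)
        omega
      · rw [S2 _ (by omega), S2 _ (by omega)]
        have := hg (j - (c-r)) (by omega)
        rw [show j + 1 - (c-r) = j - (c-r) + 1 by omega]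
        omega
  have hSn : n ∉ im c S := by
    rintro ⟨j, hj, h⟩
    by_cases h2 : j < c - r
    · rw [S1 _ h2] at h
      have := hgb (j + r) (by omega)
      have := hr2 (j+r) (by omega) (by omega)
      omega
    · rw [S2 _ (by omega)] at h
      have := hgb (j - (c-r)) (by omega)
      omega
  have hface : ¬ Bad (X ∪ im c S) (c+1) 1 m := by
    apply pigeon (fun j => rot (g j)) (fun j => rot (g j + 1))
    · intro j hj
      have := hgb j hj
      by_cases h1 : g j + 1 ≤ m - n
      · left; rw [rot1 _ h1, rot1 _ (by omega)]; omega
      · by_cases h2 : g j ≤ m - n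
        · right; rw [rot1 _ h2, rot2 _ (by omega)]; omega
        · left; rw [rot2 _ (by omega), rot2 _ (by omega)]; omega
    · rintro x (hx | ⟨j, hj, rfl⟩)
      · have hxb := hX1 x hx
        have hxn : x ≠ n := fun h => hnX (h ▸ hx)
        have : ∃ y, 1 ≤ y ∧ y < 1 + (m-1) ∧ rot y = x := by
          by_cases h : x < n
          · exact ⟨x + (m - n), by omega, by omega, by rw [rot2 _ (by omega)]; omega⟩
          · exact ⟨x - n, by omega, by omega, by rw [rot1 _ (by omega)]; omega⟩
        obtain ⟨y, hy1, hy2, rfl⟩ := this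
        obtain ⟨j, hj, h⟩ := hgc y hy1 hy2 hx
        exact ⟨j, hj, h.imp (fun h => by rw [h]) (fun h => by rw [h])⟩
      · by_cases h2 : j < c - r
        · refine ⟨j + r, by omega, Or.inr ?_⟩
          have := hr2 (j+r) (by omega) (by omega)
          rw [S1 _ h2, rot2 _ (by omega)]
        · refine ⟨j - (c-r), by omega, Or.inl ?_⟩
          have := hr1 (j-(c-r)) (by omega)
          rw [S2 _ (by omega), rot1 _ this, add_comm]
  by_cases hpair : 0 < r ∧ g (r-1) = m - n
  · right
    have hb := hgb (r-1) (by omega)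
    refine ⟨by omega, by omega, S, ⟨fun j hj => hSsp j (by omega), ?_, ?_⟩, ?_, ?_⟩
    · by_cases h : r = c
      · rw [S2 0 (by omega)]
        have := hgb (0 - (c-r)) (by omega)
        omega
      · rw [S1 0 (by omega), zero_add]
        have := hg (r-1) (by omega)
        rw [show r - 1 + 1 = r by omega] at this
        omega
    · by_cases h : c - 1 - 1 < c - r
      · rw [S1 _ h]
        by_cases h3 : c - 1 - 1 + r < c
        · have := hgb (c - 1 - 1 + r) h3
          omega
        · omega
      · rw [S2 _ (by omega)]
        have := hg.le (c-1-1-(c-r)) (r-1) (by omega) (by omega)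
        omega
    · rintro ⟨j, hj, h⟩
      exact hSn ⟨j, by omega, h⟩
    · intro h
      apply hface
      apply h.mono
      rintro x (hx | ⟨j, hj, h⟩)
      · exact Or.inl hx
      · exact Or.inr ⟨j, by omega, h⟩
  · left
    refine ⟨S, ⟨hSsp, ?_, ?_⟩, hSn, hface⟩
    · by_cases h : r = c
      · rw [S2 0 (by omega)]
        have := hgb (0 - (c-r)) (by omega)
        omega
      · rw [S1 0 (by omega), zero_add]
        have := hr2 r le_rfl (by omega)
        omega
    · by_cases h : c - 1 < c - r
      · rw [S1 _ h]
        have := hgb (c - 1 + r) (by omega)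
        omega
      · rw [S2 _ (by omega), show c - 1 - (c-r) = r - 1 by omega]
        have := hr1 (r-1) (by omega)
        omega

theorem bad_link {X : Set ℕ} {c m : ℕ} (hc : 1 ≤ c) (hm : 2 ≤ m) (h1 : 1 ∈ X) (h2 : m ∈ X) :
    Bad X (c+1) 1 m ↔ Bad X c 2 (m-1) := by
  constructor
  · rintro (⟨t, ht⟩ | ⟨t, ht⟩)
    · right
      have hb := ht.gn.bd
      refine ⟨fun j => t (j+1), fun j hj => ht.1 (j+1) (by omega), ?_, ?_, fun j hj => ht.2.2.2 _ (by omega)⟩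
      · have := ht.1 0 (by omega)
        have := hb 0 (by omega)
        dsimp only; omega
      · exact (hb (c-1+1) (by omega)).2
    · left
      have hb := ht.gn.bd
      refine ⟨t, fun j hj => ht.1 j (by omega), ht.2.1, ?_, fun j hj => ht.2.2.2 _ (by omega)⟩
      have := ht.1 (c-1) (by omega)
      have := hb (c-1+1) (by omega)
      omega
  · rintro (⟨t, ht⟩ | ⟨t, ht⟩)
    · right
      have hb := ht.gn.bd
      refine ⟨_, splice (b := c+1) (c := c) (d := 1) t (fun _ => m) c 0 ht.1 (fun j hj => by omega) le_rfl (by omega) (by omega) ?_ ?_ ?_ ?_ ?_⟩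
      · intro x hx
        have := hb x (by omega)
        omega
      · exact ⟨fun _ => ht.2.1, fun h => by omega⟩
      · intro x _; exact le_rfl
      · intro x hx; exact ht.2.2.2 x hx
      · intro x _ _; exact h2
    · left
      have hb := ht.gn.bd
      refine ⟨_, splice (b := c+1) (c := 1) (d := c) (fun _ => 1) t 1 0 (fun j hj => by omega) ht.1 le_rfl (by omega) (by omega) ?_ ?_ ?_ ?_ ?_⟩
      · intro x hx
        have := hb 0 (by omega)
        omega
      · exact ⟨fun _ => le_rfl, fun h => by omega⟩
      · intro x hx; exact (hb x (by omega)).2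
      · intro x hx; exact h1
      · intro x _ hx; exact ht.2.2.2 x hx

theorem wd_comb {X : Set ℕ} {c m : ℕ} (hc : 2 ≤ c) (hm : 2 * c + 2 ≤ m) (h1 : 1 ∈ X) (h2 : m ∈ X)
    {s t : ℕ → ℕ} (hs : InS X c 2 (m-1) s) (ht : InS X (c-1) 3 (m-2) t) : Bad X (c+1) 1 m := by
  have hsb := hs.gn.bd
  have htb := ht.gn.bd
  have hsX := hs.2.2.2
  have htX := ht.2.2.2
  rw [bad_link (by omega) (by omega) h1 h2]
  by_contra hB
  have hA : ∀ j < c - 1, t j ≤ s j + 1 := by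
    intro j hj
    by_contra hcon
    refine hB (Or.inl ⟨_, splice (b := c) (c := c) (d := c-1) s t (j+1) j hs.1 ht.1 (by omega) (by omega) (by omega) ?_ ?_ ?_ ?_ ?_⟩)
    · intro x hx
      obtain rfl : x = j := by omega
      omega
    · exact ⟨fun _ => hs.2.1, fun h => by omega⟩
    · intro x hx; have := htb x (by omega); omega
    · intro x hx; exact hsX x (by omega)
    · intro x _ hx; exact htX x hx
  have hA' : ∀ j < c - 1, s (j+1) ≤ t j + 1 := by
    intro j hj
    by_contra hcon
    refine hB (Or.inr ⟨_, splice (b := c) (c := c-1) (d := c) t s (j+1) (j+1) ht.1 hs.1 (by omega) (by omega) (by omega) ?_ ?_ ?_ ?_ ?_⟩)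
    · intro x hx
      obtain rfl : x = j := by omega
      omega
    · exact ⟨fun _ => ht.2.1, fun h => by omega⟩
    · intro x hx; have := hsb x (by omega); omega
    · intro x hx; exact htX x (by omega)
    · intro x _ hx; exact hsX x hx
  have h0 : s 0 = 2 := by
    by_contra hcon
    exact hB (Or.inr ⟨s, hs.1, by have := hs.2.1; omega, hs.2.2.1, hsX⟩)
  have hl : s (c-1) = m - 1 := by
    by_contra hcon
    exact hB (Or.inl ⟨s, hs.1, hs.2.1, by have := hs.2.2.1; omega, hsX⟩)
  have : ∀ j < c, s j ≤ 2 + 2 * j := by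
    intro j
    induction j with
    | zero => intro _; omega
    | succ j ih =>
      intro hj
      have := ih (by omega)
      have := hA j (by omega)
      have := hA' j (by omega)
      omega
  have := this (c-1) (by omega)
  omega

section HomAlg

noncomputable def ind (m : ℕ) (A : Set ℕ) : Fin (m+1) →₀ ℕ :=
  Finsupp.equivFunOnFinite.symm (fun i => by classical exact if i.val + 1 ∈ A then 1 else 0)

def spt {m : ℕ} (β : Fin (m+1) →₀ ℕ) : Set ℕ := {x | ∃ i : Fin (m+1), i.val + 1 = x ∧ i.val < m ∧ β i ≠ 0}

theorem ind_mem {m : ℕ} {A : Set ℕ} {i : Fin (m+1)} (h : i.val + 1 ∈ A) : ind m A i = 1 := by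
  simp [ind, h]

theorem ind_not_mem {m : ℕ} {A : Set ℕ} {i : Fin (m+1)} (h : i.val + 1 ∉ A) : ind m A i = 0 := by
  simp [ind, h]

theorem ind_union {m : ℕ} {A B : Set ℕ} (h : ∀ x ∈ A, x ∉ B) : ind m (A ∪ B) = ind m A + ind m B := by
  ext i
  rw [Finsupp.add_apply]
  by_cases h1 : i.val + 1 ∈ A
  · rw [ind_mem (Or.inl h1), ind_mem h1, ind_not_mem (h _ h1)]
  · by_cases h2 : i.val + 1 ∈ B
    · rw [ind_mem (Or.inr h2), ind_mem h2, ind_not_mem h1]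
    · rw [ind_not_mem h2, ind_not_mem h1, ind_not_mem (by rintro (h | h) <;> contradiction)]

theorem ind_exch (m : ℕ) (A B : Set ℕ) : ind m (B \ A) + ind m A = ind m (A \ B) + ind m B := by
  rw [← ind_union (fun x hx => hx.2), ← ind_union (fun x hx => hx.2), Set.sdiff_union_self,
    Set.sdiff_union_self, Set.union_comm]

theorem spt_bd {m : ℕ} {β : Fin (m+1) →₀ ℕ} : ∀ x ∈ spt β, 1 ≤ x ∧ x ≤ m := by
  rintro x ⟨i, rfl, h, _⟩
  omega

theorem spt_mono {m : ℕ} {β γ : Fin (m+1) →₀ ℕ} (h : β ≤ γ) : spt β ⊆ spt γ := by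
  rintro x ⟨i, rfl, h1, h2⟩
  exact ⟨i, rfl, h1, by have := h i; omega⟩

theorem spt_add_ind {m : ℕ} (β : Fin (m+1) →₀ ℕ) (C : Set ℕ) :
    spt (β + ind m C) ⊆ spt β ∪ {x | x ∈ C ∧ x ≤ m} := by
  rintro x ⟨i, rfl, h1, h2⟩
  by_cases h : i.val + 1 ∈ C
  · exact Or.inr ⟨h, by omega⟩
  · rw [Finsupp.add_apply, ind_not_mem h] at h2
    exact Or.inl ⟨i, rfl, h1, by simpa using h2⟩

theorem spt_ind_add {m : ℕ} (β : Fin (m+1) →₀ ℕ) (C : Set ℕ) (hC : ∀ x ∈ C, 1 ≤ x ∧ x ≤ m) :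
    spt (ind m C + β) = C ∪ spt β := by
  ext x
  constructor
  · intro hx
    rw [add_comm] at hx
    rcases spt_add_ind _ _ hx with h | h
    · exact Or.inr h
    · exact Or.inl h.1
  · rintro (h | ⟨i, rfl, h1, h2⟩)
    · have := hC x h
      have e : x - 1 + 1 = x := by omega
      refine ⟨⟨x - 1, by omega⟩, e, by dsimp only; omega, ?_⟩
      rw [Finsupp.add_apply, ind_mem (by simpa [e] using h)]
      omega
    · exact ⟨i, rfl, h1, by rw [Finsupp.add_apply]; omega⟩

theorem ind_le {m : ℕ} {β : Fin (m+1) →₀ ℕ} {C : Set ℕ} (hC : ∀ x ∈ C, 1 ≤ x ∧ x ≤ m) :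
    ind m C ≤ β ↔ C ⊆ spt β := by
  constructor
  · intro h x hx
    have := hC x hx
    have e : x - 1 + 1 = x := by omega
    refine ⟨⟨x - 1, by omega⟩, e, by dsimp only; omega, ?_⟩
    have := h ⟨x - 1, by omega⟩
    rw [ind_mem (by simpa [e] using hx)] at this
    omega
  · intro h i
    by_cases hi : i.val + 1 ∈ C
    · obtain ⟨j, h1, h2, h3⟩ := h hi
      obtain rfl : j = i := Fin.ext (by omega)
      rw [ind_mem hi]; omega
    · rw [ind_not_mem hi]; omega

theorem Xv_eq (k : Type*) [Field k] {m t : ℕ} (h : 1 ≤ t ∧ t ≤ m + 1) :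
    Xv k (m+1) t = MvPolynomial.monomial (ind m {t}) 1 := by
  have e : (Finsupp.single (⟨t - 1, by omega⟩ : Fin (m+1)) 1 : Fin (m+1) →₀ ℕ) = ind m {t} := by
    ext i
    by_cases hi : i.val + 1 = t
    · rw [ind_mem (by simpa using hi), Finsupp.single_apply, if_pos (Fin.ext (by dsimp only; omega))]
    · rw [ind_not_mem (by simpa using hi), Finsupp.single_apply, if_neg]
      intro h2
      apply hi
      rw [← h2]
      dsimp only
      omega
  rw [Xv, dif_pos h, MvPolynomial.X, e]

theorem prod_Xv (k : Type*) [Field k] {m : ℕ} (t : ℕ → ℕ) : ∀ b, Sp b t → (∀ j < b, 1 ≤ t j ∧ t j ≤ m + 1) →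
    ∏ j ∈ Finset.range b, Xv k (m+1) (t j) = MvPolynomial.monomial (ind m (im b t)) 1 := by
  intro b
  induction b with
  | zero =>
    intro _ _
    have : ind m (im 0 t) = 0 := by
      ext i
      exact ind_not_mem (by rintro ⟨j, hj, _⟩; omega)
    rw [this]
    simp
  | succ b ih =>
    intro h1 h2
    rw [Finset.prod_range_succ, ih (fun j hj => h1 j (by omega)) (fun j hj => h2 j (by omega)),
      Xv_eq k (h2 b (by omega)), MvPolynomial.monomial_mul, one_mul, ← ind_union]
    · have hset : im b t ∪ {t b} = im (b+1) t := by
        ext x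
        constructor
        · rintro (⟨j, hj, rfl⟩ | h)
          · exact ⟨j, by omega, rfl⟩
          · exact ⟨b, by omega, h⟩
        · rintro ⟨j, hj, rfl⟩
          by_cases h : j = b
          · subst h; exact Or.inr rfl
          · exact Or.inl ⟨j, by omega, rfl⟩
      rw [hset]
    · rintro x ⟨j, hj, rfl⟩ h
      have h : t j = t b := h
      have := h1.le j b (by omega) (by omega)
      omega

theorem im_bd {m b p q : ℕ} {t : ℕ → ℕ} (hp : 1 ≤ p) (hq : q ≤ m) (h : Gn b p q t) : ∀ x ∈ im b t, 1 ≤ x ∧ x ≤ m := by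
  rintro x ⟨j, hj, rfl⟩
  have := h.bd j hj
  omega

def gexp (m b p q : ℕ) : Set (Fin (m+1) →₀ ℕ) := {e | ∃ t, Gn b p q t ∧ e = ind m (im b t)}

theorem idealI_eq (k : Type*) [Field k] {m b p q : ℕ} (hp : 1 ≤ p) (hq : q ≤ m) :
    idealI k (m+1) b p q = Ideal.span ((fun s => MvPolynomial.monomial s (1 : k)) '' gexp m b p q) := by
  rw [idealI]
  congr 1
  ext f
  constructor
  · rintro ⟨t, h1, h2, h3, rfl⟩
    have hg : Gn b p q t := ⟨h3, h1, h2⟩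
    refine ⟨_, ⟨t, hg, rfl⟩, ?_⟩
    rw [prod_Xv k t b h3]
    intro j hj
    have := hg.bd j hj
    omega
  · rintro ⟨_, ⟨t, hg, rfl⟩, rfl⟩
    refine ⟨t, hg.2.1, hg.2.2, hg.1, ?_⟩
    rw [prod_Xv k t b hg.1]
    intro j hj
    have := hg.bd j hj
    omega

theorem gexp_le {m b p q : ℕ} (hp : 1 ≤ p) (hq : q ≤ m) (β : Fin (m+1) →₀ ℕ) :
    (∃ e ∈ gexp m b p q, e ≤ β) ↔ ∃ t, InS (spt β) b p q t := by
  constructor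
  · rintro ⟨_, ⟨t, hg, rfl⟩, h⟩
    rw [ind_le (im_bd hp hq hg)] at h
    exact ⟨t, hg.1, hg.2.1, hg.2.2, fun j hj => h ⟨j, hj, rfl⟩⟩
  · rintro ⟨t, ht⟩
    refine ⟨_, ⟨t, ht.gn, rfl⟩, ?_⟩
    rw [ind_le (im_bd hp hq ht.gn)]
    rintro x ⟨j, hj, rfl⟩
    exact ht.2.2.2 j hj

theorem mem_idealI (k : Type*) [Field k] {m b p q : ℕ} (hp : 1 ≤ p) (hq : q ≤ m)
    (f : MvPolynomial (Fin (m+1)) k) :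
    f ∈ idealI k (m+1) b p q ↔ ∀ β ∈ f.support, ∃ t, InS (spt β) b p q t := by
  rw [idealI_eq k hp hq, MvPolynomial.mem_ideal_span_monomial_image]
  exact forall₂_congr fun β _ => gexp_le hp hq β

theorem mem_I (k : Type*) [Field k] {m a : ℕ} (f : MvPolynomial (Fin (m+1)) k) :
    f ∈ idealI k (m+1) a 1 (m-1) + idealI k (m+1) a 2 m ↔ ∀ β ∈ f.support, Bad (spt β) a 1 m := by
  rw [idealI_eq k le_rfl (by omega), idealI_eq k (by omega) le_rfl, Submodule.add_eq_sup,
    ← Ideal.span_union, ← Set.image_union, MvPolynomial.mem_ideal_span_monomial_image]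
  refine forall₂_congr fun β _ => ?_
  rw [Bad, ← gexp_le le_rfl (by omega), ← gexp_le (by omega) le_rfl]
  constructor
  · rintro ⟨e, h1 | h1, h2⟩
    · exact Or.inl ⟨e, h1, h2⟩
    · exact Or.inr ⟨e, h1, h2⟩
  · rintro (⟨e, h1, h2⟩ | ⟨e, h1, h2⟩)
    · exact ⟨e, Or.inl h1, h2⟩
    · exact ⟨e, Or.inr h1, h2⟩

theorem mem_I' (k : Type*) [Field k] {m a : ℕ} (f : MvPolynomial (Fin (m+1)) k) :
    f ∈ idealI k (m+1) a 1 (m-1) + idealI k (m+1) a 2 m ↔ ∀ β, ¬ Bad (spt β) a 1 m → MvPolynomial.coeff β f = 0 := by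
  rw [mem_I]
  refine forall_congr' fun β => ?_
  rw [MvPolynomial.mem_support_iff, ne_eq, not_imp_comm]

theorem patch {k σ ι : Type*} [Field k] (Good : (σ →₀ ℕ) → Prop) (G : Set ι) (hG : G.Finite)
    (u : ι → σ →₀ ℕ) (f : ι → MvPolynomial σ k)
    (h1 : ∀ g ∈ G, ∀ β, Good β → MvPolynomial.coeff β (f g) ≠ 0 → u g ≤ β)
    (h2 : ∀ g ∈ G, ∀ g' ∈ G, ∀ δ, Good (u g + δ) → Good (u g' + δ) →
      MvPolynomial.coeff (u g + δ) (f g) = MvPolynomial.coeff (u g' + δ) (f g')) :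
    ∃ C : MvPolynomial σ k, ∀ g ∈ G, ∀ β, Good β →
      MvPolynomial.coeff β (f g - C * MvPolynomial.monomial (u g) 1) = 0 := by
  classical
  let P : (σ →₀ ℕ) → k → Prop := fun δ v => ∀ g ∈ G, Good (u g + δ) → MvPolynomial.coeff (u g + δ) (f g) = v
  have hv : ∀ δ, ∃ v, P δ v ∧ ((¬ ∃ g ∈ G, Good (u g + δ)) → v = 0) := by
    intro δ
    by_cases h : ∃ g ∈ G, Good (u g + δ)
    · obtain ⟨g, hg, hgd⟩ := h
      exact ⟨MvPolynomial.coeff (u g + δ) (f g), fun g' hg' hgd' => h2 g' hg' g hg δ hgd' hgd,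
        fun hn => absurd ⟨g, hg, hgd⟩ hn⟩
    · exact ⟨0, fun g hg hgd => absurd ⟨g, hg, hgd⟩ h, fun _ => rfl⟩
  choose v hv1 hv2 using hv
  have hfin : (Function.support v).Finite := by
    refine Set.Finite.subset (hG.biUnion (t := fun g => (fun β => β - u g) '' ((f g).support : Set (σ →₀ ℕ)))
      (fun g _ => Set.Finite.image _ (Finset.finite_toSet _))) ?_
    intro δ hδ
    have : ∃ g ∈ G, Good (u g + δ) := by
      by_contra h
      exact hδ (hv2 δ h)
    obtain ⟨g, hg, hgd⟩ := this
    refine Set.mem_biUnion hg ⟨u g + δ, ?_, by simp⟩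
    rw [Finset.mem_coe, MvPolynomial.mem_support_iff, hv1 δ g hg hgd]
    exact hδ
  let C : MvPolynomial σ k := AddMonoidAlgebra.ofCoeff (Finsupp.ofSupportFinite v hfin)
  have hC : ∀ δ, MvPolynomial.coeff δ C = v δ := fun δ => rfl
  refine ⟨C, fun g hg β hβ => ?_⟩
  rw [MvPolynomial.coeff_sub, MvPolynomial.coeff_mul_monomial']
  split_ifs with hle
  · obtain ⟨δ, rfl⟩ := exists_add_of_le hle
    rw [hv1 δ g hg hβ, add_tsub_cancel_left, hC, mul_one, sub_self]
  · rw [sub_zero]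
    by_contra h
    exact hle (h1 g hg β hβ h)

theorem transfer {k : Type*} [Field k] {m a : ℕ} {f : Set ℕ → MvPolynomial (Fin (m+1)) k} {A B : Set ℕ}
    (hcomp : ∀ β, ¬ Bad (spt β) a 1 m →
      MvPolynomial.coeff β (MvPolynomial.monomial (ind m (B \ A)) 1 * f A) =
      MvPolynomial.coeff β (MvPolynomial.monomial (ind m (A \ B)) 1 * f B))
    (β : Fin (m+1) →₀ ℕ) (hβ : ¬ Bad (spt β ∪ {x | x ∈ B ∧ x ≤ m}) a 1 m) :
    MvPolynomial.coeff β (f A) =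
      MvPolynomial.coeff (ind m (B \ A) + β) (MvPolynomial.monomial (ind m (A \ B)) 1 * f B) := by
  rw [← hcomp, MvPolynomial.coeff_monomial_mul, one_mul]
  intro h
  apply hβ
  apply h.mono
  rw [add_comm]
  refine (spt_add_ind _ _).trans ?_
  rintro x (hx | hx)
  · exact Or.inl hx
  · exact Or.inr ⟨hx.1.1, hx.2⟩

def IsGen (m c : ℕ) (A : Set ℕ) : Prop :=
  (∃ s, Gn c 2 (m-1) s ∧ A = im c s) ∨ (∃ t, Gn (c-1) 3 (m-2) t ∧ A = {m+1} ∪ im (c-1) t)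

theorem fin_sets (P : Set ℕ → Prop) (m : ℕ) (h : ∀ A, P A → A ⊆ Set.Icc 1 m) : {A | P A}.Finite :=
  (Set.finite_Icc 1 m).finite_subsets.subset h

/-- no coefficient where a variable of `A` is missing and `B` avoids this variable -/
theorem transfer_zero {k : Type*} [Field k] {m a : ℕ} {f : Set ℕ → MvPolynomial (Fin (m+1)) k} {A B : Set ℕ}
    (hcomp : ∀ β, ¬ Bad (spt β) a 1 m →
      MvPolynomial.coeff β (MvPolynomial.monomial (ind m (B \ A)) 1 * f A) =
      MvPolynomial.coeff β (MvPolynomial.monomial (ind m (A \ B)) 1 * f B))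
    (β : Fin (m+1) →₀ ℕ) (hβ : ¬ Bad (spt β ∪ {x | x ∈ B ∧ x ≤ m}) a 1 m)
    (n : ℕ) (hn : 1 ≤ n ∧ n ≤ m) (hnA : n ∈ A) (hnB : n ∉ B) (hnβ : n ∉ spt β) :
    MvPolynomial.coeff β (f A) = 0 := by
  rw [transfer hcomp β hβ, MvPolynomial.coeff_monomial_mul', if_neg]
  intro h
  have e : n - 1 + 1 = n := by omega
  have := h ⟨n - 1, by omega⟩
  rw [Finsupp.add_apply, ind_mem (by simpa [e] using ⟨hnA, hnB⟩), ind_not_mem (by simp [e, hnA]),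
    zero_add] at this
  exact hnβ ⟨⟨n-1, by omega⟩, e, by dsimp only; omega, by omega⟩

theorem step1 {k : Type*} [Field k] {m c : ℕ} (hc : 2 ≤ c) (hm : 2 * c + 2 ≤ m)
    (f : Set ℕ → MvPolynomial (Fin (m+1)) k)
    (hcomp : ∀ A B, IsGen m c A → IsGen m c B → ∀ β, ¬ Bad (spt β) (c+1) 1 m →
      MvPolynomial.coeff β (MvPolynomial.monomial (ind m (B \ A)) 1 * f A) =
      MvPolynomial.coeff β (MvPolynomial.monomial (ind m (A \ B)) 1 * f B)) :
    ∃ C : MvPolynomial (Fin (m+1)) k, ∀ s, Gn c 2 (m-1) s → ∀ β, ¬ Bad (spt β) (c+1) 1 m →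
      MvPolynomial.coeff β (f (im c s) - C * MvPolynomial.monomial (ind m (im c s)) 1) = 0 := by
  have hbd : ∀ s, Gn c 2 (m-1) s → ∀ x ∈ im c s, 1 ≤ x ∧ x ≤ m :=
    fun s hs => im_bd (by omega) (by omega) hs
  obtain ⟨C, hC⟩ := patch (fun β => ¬ Bad (spt β) (c+1) 1 m) {A | ∃ s, Gn c 2 (m-1) s ∧ A = im c s}
    (fin_sets _ m (by
      rintro A ⟨s, hs, rfl⟩ x hx
      exact hbd s hs x hx)) (ind m) f (by
      rintro _ ⟨s, hs, rfl⟩ β hβ hne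
      rw [ind_le (hbd s hs)]
      intro n hn
      by_contra hnβ
      apply hne
      have hnb := hbd s hs n hn
      rcases facet hc (by omega) hβ spt_bd hnb hnβ with ⟨s', hs', h1, h2⟩ | ⟨_, _, t, ht, h1, h2⟩
      · refine transfer_zero (hcomp _ _ (Or.inl ⟨s, hs, rfl⟩) (Or.inl ⟨s', hs', rfl⟩)) β ?_ n hnb hn h1 hnβ
        exact fun h => h2 (h.mono (Set.union_subset_union_right _ fun x hx => hx.1))
      · refine transfer_zero (hcomp _ _ (Or.inl ⟨s, hs, rfl⟩) (Or.inr ⟨t, ht, rfl⟩)) β ?_ n hnb hn ?_ hnβ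
        · refine fun h => h2 (h.mono (Set.union_subset_union_right _ fun x hx => ?_))
          rcases hx with ⟨h | h, h'⟩
          · have h : x = m + 1 := h
            omega
          · exact h
        · rintro (h | h)
          · have h : n = m + 1 := h
            omega
          · exact h1 h) (by
      rintro _ ⟨s, hs, rfl⟩ _ ⟨s', hs', rfl⟩ δ h1 h2
      rw [spt_ind_add _ _ (hbd s hs), Set.union_comm] at h1
      rw [spt_ind_add _ _ (hbd s' hs'), Set.union_comm] at h2
      refine connected (F := spt δ) (p := 1) (q := m) (fun s => MvPolynomial.coeff (ind m (im c s) + δ) (f (im c s)))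
        ?_ s s' hs hs' h1 h2
      intro s s' hs hs' h
      rw [transfer (hcomp _ _ (Or.inl ⟨s, hs, rfl⟩) (Or.inl ⟨s', hs', rfl⟩)) (ind m (im c s) + δ), ← add_assoc,
        ind_exch, add_assoc, MvPolynomial.coeff_monomial_mul, one_mul]
      intro hB
      apply h
      apply hB.mono
      rw [spt_ind_add _ _ (hbd s hs)]
      rintro x ((hx | hx) | hx)
      · exact Or.inr (Or.inl hx)
      · exact Or.inl hx
      · exact Or.inr (Or.inr hx.1))
  exact ⟨C, fun s hs => hC _ ⟨s, hs, rfl⟩⟩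

theorem step2 {k : Type*} [Field k] {m c : ℕ} (hc : 2 ≤ c) (hm : 2 * c + 2 ≤ m)
    (f : Set ℕ → MvPolynomial (Fin (m+1)) k)
    (hcomp : ∀ A B, IsGen m c A → IsGen m c B → ∀ β, ¬ Bad (spt β) (c+1) 1 m →
      MvPolynomial.coeff β (MvPolynomial.monomial (ind m (B \ A)) 1 * f A) =
      MvPolynomial.coeff β (MvPolynomial.monomial (ind m (A \ B)) 1 * f B))
    (hz : ∀ s, Gn c 2 (m-1) s → ∀ β, ¬ Bad (spt β) (c+1) 1 m → MvPolynomial.coeff β (f (im c s)) = 0) :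
    ∃ C : MvPolynomial (Fin (m+1)) k, ∀ t, Gn (c-1) 3 (m-2) t → ∀ β, ¬ Bad (spt β) (c+1) 1 m →
      MvPolynomial.coeff β (f ({m+1} ∪ im (c-1) t) -
        C * MvPolynomial.monomial (ind m ({1, m} ∪ im (c-1) t)) 1) = 0 := by
  have hbd : ∀ s, Gn (c-1) 3 (m-2) s → ∀ x ∈ {1, m} ∪ im (c-1) s, 1 ≤ x ∧ x ≤ m := by
    rintro s hs x ((rfl | rfl) | hx)
    · omega
    · omega
    · exact im_bd (by omega) (by omega) hs x hx
  have hdj : ∀ s, Gn (c-1) 3 (m-2) s → ind m ({1, m} ∪ im (c-1) s) = ind m {1, m} + ind m (im (c-1) s) := by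
    intro s hs
    apply ind_union
    rintro x (rfl | rfl) ⟨j, hj, h⟩
    · have := hs.bd j hj; omega
    · have := hs.bd j hj; omega
  have hdz : ∀ s s', (({m+1} ∪ im (c-1) s') \ ({m+1} ∪ im (c-1) s) : Set ℕ) ⊆ im (c-1) s' := by
    rintro s s' x ⟨h1 | h1, h2⟩
    · exact absurd (Or.inl h1) h2
    · exact h1
  have hzz : ∀ (s : ℕ → ℕ) x, x ∈ ({m+1} ∪ im (c-1) s : Set ℕ) → x ≤ m → x ∈ im (c-1) s := by
    rintro s x (h | h) hx
    · have h : x = m + 1 := h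
      omega
    · exact h
  obtain ⟨C, hC⟩ := patch (fun β => ¬ Bad (spt β) (c+1) 1 m) {A | ∃ s, Gn (c-1) 3 (m-2) s ∧ A = im (c-1) s}
    (fin_sets _ m (by
      rintro A ⟨s, hs, rfl⟩ x hx
      exact hbd s hs x (Or.inr hx))) (fun A => ind m ({1, m} ∪ A)) (fun A => f ({m+1} ∪ A)) (by
      rintro _ ⟨t, ht, rfl⟩ β hβ hne
      rw [ind_le (hbd t ht)]
      intro n hn
      by_contra hnβ
      apply hne
      have hnb := hbd t ht n hn
      rcases facet hc (by omega) hβ spt_bd hnb hnβ with ⟨s', hs', h1, h2⟩ | ⟨hn1, hnm, t', ht', h1, h2⟩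
      · have hBB : ¬ Bad (spt β ∪ {x | x ∈ im c s' ∧ x ≤ m}) (c+1) 1 m :=
          fun h => h2 (h.mono (Set.union_subset_union_right _ fun x hx => hx.1))
        rw [transfer (hcomp _ _ (Or.inr ⟨t, ht, rfl⟩) (Or.inl ⟨s', hs', rfl⟩)) β hBB,
          MvPolynomial.coeff_monomial_mul']
        split_ifs with hle
        · rw [hz s' hs', mul_zero]
          intro h
          apply hBB
          apply (h.mono (spt_mono tsub_le_self)).mono
          rw [add_comm]
          refine (spt_add_ind _ _).trans ?_
          rintro x (hx | hx)
          · exact Or.inl hx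
          · exact Or.inr ⟨hx.1.1, hx.2⟩
        · rfl
      · have hnt : n ∈ im (c-1) t := by
          rcases hn with (rfl | rfl) | h
          · omega
          · omega
          · exact h
        refine transfer_zero (hcomp _ _ (Or.inr ⟨t, ht, rfl⟩) (Or.inr ⟨t', ht', rfl⟩)) β ?_ n hnb (Or.inr hnt) ?_ hnβ
        · exact fun h => h2 (h.mono (Set.union_subset_union_right _ fun x hx => hzz _ _ hx.1 hx.2))
        · exact fun h => h1 (hzz _ _ h (by omega))) (by
      rintro _ ⟨s, hs, rfl⟩ _ ⟨s', hs', rfl⟩ δ h1 h2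
      try dsimp only at h1 h2 ⊢
      have hF : ∀ A : Set ℕ, {1, m} ∪ A ∪ spt δ = ({1, m} ∪ spt δ) ∪ A := fun A => by
        rw [Set.union_right_comm]
      have hlink : ∀ A : Set ℕ, Bad (({1, m} ∪ spt δ) ∪ A) (c+1) 1 m ↔ Bad (({1, m} ∪ spt δ) ∪ A) (c-1+1) 2 (m-1) := by
        intro A
        rw [show c - 1 + 1 = c by omega]
        exact bad_link (by omega) (by omega) (Or.inl (Or.inl (Or.inl rfl))) (Or.inl (Or.inl (Or.inr rfl)))
      rw [spt_ind_add _ _ (hbd s hs), hF, hlink] at h1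
      rw [spt_ind_add _ _ (hbd s' hs'), hF, hlink] at h2
      refine connected (F := {1, m} ∪ spt δ) (p := 2) (q := m-1)
        (fun s => MvPolynomial.coeff (ind m ({1, m} ∪ im (c-1) s) + δ) (f ({m+1} ∪ im (c-1) s)))
        ?_ s s' hs hs' h1 h2
      intro s s' hs hs' h
      replace hs : Gn (c-1) 3 (m-2) s := hs
      replace hs' : Gn (c-1) 3 (m-2) s' := hs'
      rw [← hlink] at h
      have hex : ind m (({m+1} ∪ im (c-1) s') \ ({m+1} ∪ im (c-1) s)) + (ind m ({1, m} ∪ im (c-1) s) + δ) =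
          ind m (({m+1} ∪ im (c-1) s) \ ({m+1} ∪ im (c-1) s')) + (ind m ({1, m} ∪ im (c-1) s') + δ) := by
        have hu : ∀ t, Gn (c-1) 3 (m-2) t → ind m ({m+1} ∪ im (c-1) t) = ind m {m+1} + ind m (im (c-1) t) := by
          intro t ht
          apply ind_union
          rintro x hx hx'
          have hx : x = m + 1 := hx
          have := hbd t ht x (Or.inr hx')
          omega
        have := ind_exch m ({m+1} ∪ im (c-1) s) ({m+1} ∪ im (c-1) s')
        rw [hdj s hs, hdj s' hs']
        rw [hu s hs, hu s' hs'] at this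
        ext i
        have := DFunLike.congr_fun this i
        simp only [Finsupp.add_apply] at this ⊢
        omega
      rw [transfer (hcomp _ _ (Or.inr ⟨s, hs, rfl⟩) (Or.inr ⟨s', hs', rfl⟩)) (ind m ({1, m} ∪ im (c-1) s) + δ),
        hex, MvPolynomial.coeff_monomial_mul, one_mul]
      intro hB
      apply h
      apply hB.mono
      rw [spt_ind_add _ _ (hbd s hs)]
      rintro x (((hx | hx) | hx) | hx)
      · exact Or.inl (Or.inl hx)
      · exact Or.inr (Or.inl hx)
      · exact Or.inl (Or.inr hx)
      · exact Or.inr (Or.inr (hzz _ _ hx.1 hx.2)))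
  exact ⟨C, fun s hs => hC _ ⟨s, hs, rfl⟩⟩

theorem step12 {k : Type*} [Field k] {m c : ℕ} (hc : 2 ≤ c) (hm : 2 * c + 2 ≤ m)
    (f : Set ℕ → MvPolynomial (Fin (m+1)) k)
    (hcomp : ∀ A B, IsGen m c A → IsGen m c B → ∀ β, ¬ Bad (spt β) (c+1) 1 m →
      MvPolynomial.coeff β (MvPolynomial.monomial (ind m (B \ A)) 1 * f A) =
      MvPolynomial.coeff β (MvPolynomial.monomial (ind m (A \ B)) 1 * f B)) :
    ∃ C C' : MvPolynomial (Fin (m+1)) k, (∀ s, Gn c 2 (m-1) s → ∀ β, ¬ Bad (spt β) (c+1) 1 m →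
      MvPolynomial.coeff β (f (im c s) - C * MvPolynomial.monomial (ind m (im c s)) 1) = 0) ∧
      ∀ t, Gn (c-1) 3 (m-2) t → ∀ β, ¬ Bad (spt β) (c+1) 1 m →
      MvPolynomial.coeff β (f ({m+1} ∪ im (c-1) t) - C * MvPolynomial.monomial (ind m ({m+1} ∪ im (c-1) t)) 1 -
        C' * MvPolynomial.monomial (ind m ({1, m} ∪ im (c-1) t)) 1) = 0 := by
  obtain ⟨C, hC⟩ := step1 hc hm f hcomp
  obtain ⟨C', hC'⟩ := step2 hc hm (fun A => f A - C * MvPolynomial.monomial (ind m A) 1) (by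
    intro A B hA hB β hβ
    have e : MvPolynomial.monomial (ind m (B \ A)) (1 : k) * (C * MvPolynomial.monomial (ind m A) 1) =
        MvPolynomial.monomial (ind m (A \ B)) (1 : k) * (C * MvPolynomial.monomial (ind m B) 1) := by
      rw [mul_left_comm, MvPolynomial.monomial_mul, ind_exch, ← MvPolynomial.monomial_mul, mul_left_comm]
    rw [mul_sub, mul_sub, MvPolynomial.coeff_sub, MvPolynomial.coeff_sub, e, hcomp A B hA hB β hβ]) hC
  exact ⟨C, C', hC, hC'⟩

end HomAlg


section HomMain

open MvPolynomial in
theorem J_eq (k : Type*) [Field k] {m c : ℕ} (hm : 2 * c + 2 ≤ m) :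
    idealI k (m+1) c 2 (m-1) + Ideal.span {Xv k (m+1) (m+1)} * idealI k (m+1) (c-1) 3 (m-2) =
    Ideal.span {g | ∃ A, IsGen m c A ∧ g = monomial (ind m A) (1 : k)} := by
  rw [idealI_eq k (by omega) (by omega), idealI_eq k (by omega) (by omega), Ideal.span_mul_span',
    Submodule.add_eq_sup, ← Ideal.span_union]
  have hz : ∀ t, Gn (c-1) 3 (m-2) t → Xv k (m+1) (m+1) * monomial (ind m (im (c-1) t)) (1 : k) =
      monomial (ind m ({m+1} ∪ im (c-1) t)) 1 := by
    intro t ht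
    rw [Xv_eq k (by omega), monomial_mul, one_mul, ← ind_union]
    rintro x hx hx'
    have hx : x = m + 1 := hx
    have := im_bd (m := m) (by omega) (by omega) ht x hx'
    omega
  congr 1
  ext g
  constructor
  · rintro (⟨_, ⟨t, ht, rfl⟩, rfl⟩ | hg)
    · exact ⟨_, Or.inl ⟨t, ht, rfl⟩, rfl⟩
    · obtain ⟨x, hx, _, ⟨_, ⟨t, ht, rfl⟩, rfl⟩, rfl⟩ := Set.mem_mul.1 hg
      have hx : x = _ := hx
      subst hx
      exact ⟨_, Or.inr ⟨t, ht, rfl⟩, hz t ht⟩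
  · rintro ⟨_, ⟨t, ht, rfl⟩ | ⟨t, ht, rfl⟩, rfl⟩
    · exact Or.inl ⟨_, ⟨t, ht, rfl⟩, rfl⟩
    · refine Or.inr (Set.mem_mul.2 ⟨_, rfl, _, ⟨_, ⟨t, ht, rfl⟩, rfl⟩, hz t ht⟩)

theorem ext_gen {R : Type*} [CommRing R] (S : Set R) (Jb : Ideal R) (h : Jb = Ideal.span S)
    (D E : Jb →ₗ[R] R) (hD : ∀ u : Jb, (u : R) ∈ S → D u = E u) : D = E := by
  subst h
  ext ⟨u, hu⟩
  induction hu using Submodule.span_induction with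
  | mem x hx => exact hD ⟨x, _⟩ hx
  | zero => exact (map_zero D).trans (map_zero E).symm
  | add x y hx hy h1 h2 =>
    have := map_add D ⟨x, hx⟩ ⟨y, hy⟩
    have h3 := map_add E ⟨x, hx⟩ ⟨y, hy⟩
    rw [h1, h2, ← h3] at this
    exact this
  | smul r x hx h1 =>
    have := map_smul D r ⟨x, hx⟩
    have h3 := map_smul E r ⟨x, hx⟩
    rw [h1, ← h3] at this
    exact this

open MvPolynomial in
theorem key_wd (k : Type*) [Field k] {m c : ℕ} (hc : 2 ≤ c) (hm : 2 * c + 2 ≤ m)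
    (v w : MvPolynomial (Fin (m+1)) k) (hv : v ∈ idealI k (m+1) c 2 (m-1))
    (hw : w ∈ idealI k (m+1) (c-1) 3 (m-2))
    (h : v + Xv k (m+1) (m+1) * w ∈ idealI k (m+1) (c+1) 1 (m-1) + idealI k (m+1) (c+1) 2 m) :
    Xv k (m+1) 1 * Xv k (m+1) m * w ∈ idealI k (m+1) (c+1) 1 (m-1) + idealI k (m+1) (c+1) 2 m := by
  rw [mem_I'] at h ⊢
  rw [mem_idealI k (by omega) (by omega)] at hv hw
  intro β hβ
  have e : Xv k (m+1) 1 * Xv k (m+1) m = monomial (ind m {1, m}) 1 := by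
    rw [Xv_eq k (by omega), Xv_eq k (by omega), monomial_mul, one_mul, ← ind_union]
    · rfl
    · rintro x hx hx'
      have hx : x = 1 := hx
      have hx' : x = m := hx'
      omega
  have h1m : ∀ x ∈ ({1, m} : Set ℕ), 1 ≤ x ∧ x ≤ m := by
    rintro x (rfl | rfl) <;> omega
  rw [e, coeff_monomial_mul']
  split_ifs with hle
  · obtain ⟨γ, rfl⟩ := exists_add_of_le hle
    rw [add_tsub_cancel_left, one_mul]
    by_contra hne
    have hs := spt_ind_add γ _ h1m
    rw [hs] at hβ
    obtain ⟨t, ht⟩ := hw γ (mem_support_iff.2 hne)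
    have hsub : spt (ind m {m+1} + γ) ⊆ spt γ := by
      rw [add_comm]
      refine (spt_add_ind _ _).trans ?_
      rintro x (hx | ⟨hx, hx'⟩)
      · exact hx
      · have hx : x = m + 1 := hx
        omega
    have h0 := h (ind m {m+1} + γ) (fun hb => hβ (hb.mono (hsub.trans Set.subset_union_right)))
    rw [coeff_add, Xv_eq k (by omega), coeff_monomial_mul, one_mul] at h0
    have hne' : coeff (ind m {m+1} + γ) v ≠ 0 := by
      intro h1
      rw [h1, zero_add] at h0
      exact hne h0
    obtain ⟨s, hs⟩ := hv _ (mem_support_iff.2 hne')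
    apply hβ
    refine wd_comb hc hm (Or.inl (Or.inl rfl)) (Or.inl (Or.inr rfl)) (s := s) (t := t) ?_ ?_
    · exact ⟨hs.1, hs.2.1, hs.2.2.1, fun j hj => Or.inr (hsub (hs.2.2.2 j hj))⟩
    · exact ⟨ht.1, ht.2.1, ht.2.2.1, fun j hj => Or.inr (ht.2.2.2 j hj)⟩
  · rfl

theorem phi_exists {R : Type*} [CommRing R] (I P Q : Ideal R) (z y : R)
    (key : ∀ v ∈ P, ∀ w ∈ Q, v + z * w ∈ I → y * w ∈ I)
    (Jb : Ideal (R ⧸ I)) (hJ : Jb = (P + Ideal.span {z} * Q).map (Ideal.Quotient.mk I)) :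
    ∃ φ : Jb →ₗ[R ⧸ I] R ⧸ I, ∀ u : Jb, ∀ v ∈ P, ∀ w ∈ Q,
      (u : R ⧸ I) = Ideal.Quotient.mk I (v + z * w) → φ u = Ideal.Quotient.mk I (y * w) := by
  have hex : ∀ u : Jb, ∃ v ∈ P, ∃ w ∈ Q, (u : R ⧸ I) = Ideal.Quotient.mk I (v + z * w) := by
    rintro ⟨u, hu⟩
    rw [hJ, Ideal.mem_map_iff_of_surjective _ Ideal.Quotient.mk_surjective] at hu
    obtain ⟨x, hx, rfl⟩ := hu
    rw [Submodule.add_eq_sup] at hx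
    obtain ⟨v, hv, y', hy', rfl⟩ := Submodule.mem_sup.1 hx
    obtain ⟨w, hw, rfl⟩ := Ideal.mem_span_singleton_mul.1 hy'
    exact ⟨v, hv, w, hw, rfl⟩
  have key2 : ∀ v ∈ P, ∀ w ∈ Q, ∀ v' ∈ P, ∀ w' ∈ Q,
      Ideal.Quotient.mk I (v + z * w) = Ideal.Quotient.mk I (v' + z * w') →
      Ideal.Quotient.mk I (y * w) = Ideal.Quotient.mk I (y * w') := by
    intro v hv w hw v' hv' w' hw' h
    rw [Ideal.Quotient.eq] at h ⊢
    have := key (v - v') (P.sub_mem hv hv') (w - w') (Q.sub_mem hw hw') (by convert h using 1; ring)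
    convert this using 1
    ring
  choose v hv w hw h using hex
  refine ⟨⟨⟨fun u => Ideal.Quotient.mk I (y * w u), ?_⟩, ?_⟩, ?_⟩
  · intro u u'
    rw [← map_add, ← mul_add]
    refine key2 (v (u + u')) (hv _) _ (hw _) (v u + v u') (P.add_mem (hv _) (hv _)) _ (Q.add_mem (hw _) (hw _)) ?_
    rw [← h, Submodule.coe_add, h u, h u', ← map_add]
    congr 1
    ring
  · intro r u
    obtain ⟨r, rfl⟩ := Ideal.Quotient.mk_surjective r
    have e : (RingHom.id (R ⧸ I)) (Ideal.Quotient.mk I r) • Ideal.Quotient.mk I (y * w u) =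
        Ideal.Quotient.mk I (y * (r * w u)) := by
      rw [RingHom.id_apply, smul_eq_mul, ← map_mul]
      congr 1
      ring
    refine Eq.trans ?_ e.symm
    refine key2 (v (Ideal.Quotient.mk I r • u)) (hv _) _ (hw _) (r * v u) (P.mul_mem_left _ (hv _)) _
      (Q.mul_mem_left _ (hw _)) ?_
    rw [← h, Submodule.coe_smul, h u, smul_eq_mul, ← map_mul]
    congr 1
    ring
  · intro u v' hv' w' hw' hu
    exact key2 (v u) (hv u) _ (hw u) v' hv' w' hw' ((h u).symm.trans hu)

end HomMain

/-- Lemma identifying the Hom module (d even case). Let `d ≥ 4` be even, `d + 1 < m`,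
`a = (d+2)/2`. In `R = k[x_1,…,x_m,z]` (with `z` the last variable) set
`I = I_{a,1,m−1} + I_{a,2,m}` and `J = I_{a−1,2,m−1} + z·I_{a−2,3,m−2}`, and let `J̄` be the
image of `J` in `R/I`. Then there is a unique `R/I`-linear map `φ : J̄ → R/I` with
`φ(v) = 0` for `v ∈ I_{a−1,2,m−1}` and `φ(zw) = x_1 x_m w` for `w ∈ I_{a−2,3,m−2}`; moreover
`Hom_{R/I}(J̄, R/I)` is generated as an `R/I`-module by the inclusion `ι` and `φ`. -/
theorem hom_module_identification_even (k : Type*) [Field k] (d m : ℕ)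
    (hd : Even d) (hd4 : 4 ≤ d) (hm : d + 1 < m) (a : ℕ) (ha : a = (d + 2) / 2)
    (I J : Ideal (MvPolynomial (Fin (m + 1)) k))
    (hI : I = idealI k (m + 1) a 1 (m - 1) + idealI k (m + 1) a 2 m)
    (hJ : J = idealI k (m + 1) (a - 1) 2 (m - 1) +
      Ideal.span {Xv k (m + 1) (m + 1)} * idealI k (m + 1) (a - 2) 3 (m - 2))
    (Jbar : Ideal (MvPolynomial (Fin (m + 1)) k ⧸ I))
    (hJbar : Jbar = J.map (Ideal.Quotient.mk I)) :
    ∃ φ : Jbar →ₗ[MvPolynomial (Fin (m + 1)) k ⧸ I] MvPolynomial (Fin (m + 1)) k ⧸ I,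
      ((∀ u : Jbar, ∀ v ∈ idealI k (m + 1) (a - 1) 2 (m - 1),
          (u : MvPolynomial (Fin (m + 1)) k ⧸ I) = Ideal.Quotient.mk I v → φ u = 0) ∧
        (∀ u : Jbar, ∀ w ∈ idealI k (m + 1) (a - 2) 3 (m - 2),
          (u : MvPolynomial (Fin (m + 1)) k ⧸ I) =
            Ideal.Quotient.mk I (Xv k (m + 1) (m + 1) * w) →
          φ u = Ideal.Quotient.mk I (Xv k (m + 1) 1 * Xv k (m + 1) m * w))) ∧
      (∀ ψ : Jbar →ₗ[MvPolynomial (Fin (m + 1)) k ⧸ I] MvPolynomial (Fin (m + 1)) k ⧸ I,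
        ((∀ u : Jbar, ∀ v ∈ idealI k (m + 1) (a - 1) 2 (m - 1),
          (u : MvPolynomial (Fin (m + 1)) k ⧸ I) = Ideal.Quotient.mk I v → ψ u = 0) ∧
        (∀ u : Jbar, ∀ w ∈ idealI k (m + 1) (a - 2) 3 (m - 2),
          (u : MvPolynomial (Fin (m + 1)) k ⧸ I) =
            Ideal.Quotient.mk I (Xv k (m + 1) (m + 1) * w) →
          ψ u = Ideal.Quotient.mk I (Xv k (m + 1) 1 * Xv k (m + 1) m * w))) → ψ = φ) ∧
      Submodule.span (MvPolynomial (Fin (m + 1)) k ⧸ I)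
        {Submodule.subtype Jbar, φ} = ⊤ := by

  classical
  obtain ⟨e, rfl⟩ := hd
  obtain ⟨c, rfl⟩ : ∃ c, a = c + 1 := ⟨a - 1, by omega⟩
  have hc : 2 ≤ c := by omega
  have hm' : 2 * c + 2 ≤ m := by omega
  rw [show c + 1 - 1 = c by omega, show c + 1 - 2 = c - 1 by omega] at *
  obtain ⟨φ, hφ⟩ := phi_exists I (idealI k (m+1) c 2 (m-1)) (idealI k (m+1) (c-1) 3 (m-2))
    (Xv k (m+1) (m+1)) (Xv k (m+1) 1 * Xv k (m+1) m)
    (by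
      intro v hv w hw h
      rw [hI] at h ⊢
      exact key_wd k hc hm' v w hv hw h) Jbar (by rw [hJbar, hJ])
  have hJs : J = Ideal.span {g | ∃ A, IsGen m c A ∧ g = MvPolynomial.monomial (ind m A) (1 : k)} := by
    rw [hJ, J_eq k hm']
  have hJb : Jbar = Ideal.span (Ideal.Quotient.mk I ''
      {g | ∃ A, IsGen m c A ∧ g = MvPolynomial.monomial (ind m A) (1 : k)}) := by
    rw [hJbar, hJs, Ideal.map_span]
  have hP : ∀ s, Gn c 2 (m-1) s → MvPolynomial.monomial (ind m (im c s)) (1 : k) ∈ idealI k (m+1) c 2 (m-1) := by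
    intro s hs
    rw [idealI_eq k (by omega) (by omega)]
    exact Ideal.subset_span ⟨_, ⟨s, hs, rfl⟩, rfl⟩
  have hQ : ∀ s, Gn (c-1) 3 (m-2) s →
      MvPolynomial.monomial (ind m (im (c-1) s)) (1 : k) ∈ idealI k (m+1) (c-1) 3 (m-2) := by
    intro s hs
    rw [idealI_eq k (by omega) (by omega)]
    exact Ideal.subset_span ⟨_, ⟨s, hs, rfl⟩, rfl⟩
  have hz : ∀ t, Gn (c-1) 3 (m-2) t →
      MvPolynomial.monomial (ind m ({m+1} ∪ im (c-1) t)) (1 : k) =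
      Xv k (m+1) (m+1) * MvPolynomial.monomial (ind m (im (c-1) t)) (1 : k) := by
    intro t ht
    rw [Xv_eq k (by omega), MvPolynomial.monomial_mul, one_mul, ← ind_union]
    rintro x hx hx'
    have hx : x = m + 1 := hx
    have := im_bd (m := m) (by omega) (by omega) ht x hx'
    omega
  have hy : ∀ t, Gn (c-1) 3 (m-2) t →
      MvPolynomial.monomial (ind m ({1, m} ∪ im (c-1) t)) (1 : k) =
      Xv k (m+1) 1 * Xv k (m+1) m * MvPolynomial.monomial (ind m (im (c-1) t)) (1 : k) := by
    intro t ht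
    rw [ind_union, Xv_eq k (by omega), Xv_eq k (by omega), MvPolynomial.monomial_mul,
      MvPolynomial.monomial_mul, one_mul, one_mul, ← ind_union (A := {1})]
    · rfl
    · rintro x hx hx'
      have hx : x = 1 := hx
      have hx' : x = m := hx'
      omega
    · rintro x (rfl | rfl) ⟨j, hj, h⟩
      · have := ht.bd j hj; omega
      · have := ht.bd j hj; omega
  have hφ1 : ∀ u : Jbar, ∀ v ∈ idealI k (m + 1) c 2 (m - 1),
      (u : MvPolynomial (Fin (m + 1)) k ⧸ I) = Ideal.Quotient.mk I v → φ u = 0 := by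
    intro u v hv hu
    rw [hφ u v hv 0 (Ideal.zero_mem _) (by rw [hu, mul_zero, add_zero]), mul_zero, map_zero]
  have hφ2 : ∀ u : Jbar, ∀ w ∈ idealI k (m + 1) (c - 1) 3 (m - 2),
      (u : MvPolynomial (Fin (m + 1)) k ⧸ I) = Ideal.Quotient.mk I (Xv k (m + 1) (m + 1) * w) →
      φ u = Ideal.Quotient.mk I (Xv k (m + 1) 1 * Xv k (m + 1) m * w) := by
    intro u w hw hu
    exact hφ u 0 (Ideal.zero_mem _) w hw (by rw [hu, zero_add])
  refine ⟨φ, ⟨hφ1, hφ2⟩, ?_, ?_⟩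
  · rintro ψ ⟨h1, h2⟩
    refine ext_gen _ Jbar hJb ψ φ ?_
    rintro u ⟨_, ⟨A, ⟨s, hs, rfl⟩ | ⟨t, ht, rfl⟩, rfl⟩, hu⟩
    · rw [h1 u _ (hP s hs) hu.symm, hφ1 u _ (hP s hs) hu.symm]
    · rw [hz t ht] at hu
      rw [h2 u _ (hQ t ht) hu.symm, hφ2 u _ (hQ t ht) hu.symm]
  · rw [eq_top_iff]
    rintro ψ -
    have hmem : ∀ A, IsGen m c A → Ideal.Quotient.mk I (MvPolynomial.monomial (ind m A) (1 : k)) ∈ Jbar := by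
      intro A hA
      rw [hJb]
      exact Ideal.subset_span ⟨_, ⟨A, hA, rfl⟩, rfl⟩
    have hf : ∀ A : Set ℕ, ∃ g : MvPolynomial (Fin (m+1)) k, ∀ hA : IsGen m c A,
        Ideal.Quotient.mk I g = ψ ⟨_, hmem A hA⟩ := by
      intro A
      by_cases hA : IsGen m c A
      · obtain ⟨g, hg⟩ := Ideal.Quotient.mk_surjective (ψ ⟨_, hmem A hA⟩)
        exact ⟨g, fun _ => hg⟩
      · exact ⟨0, fun h => absurd h hA⟩
    choose f hf using hf
    obtain ⟨C, C', hC, hC'⟩ := step12 hc hm' f (by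
      intro A B hA hB
      have : MvPolynomial.monomial (ind m (B \ A)) 1 * f A -
          MvPolynomial.monomial (ind m (A \ B)) 1 * f B ∈ I := by
        rw [← Ideal.Quotient.eq, map_mul, map_mul, hf A hA, hf B hB, ← smul_eq_mul, ← smul_eq_mul,
          ← map_smul, ← map_smul]
        congr 1
        apply Subtype.ext
        rw [Submodule.coe_smul, Submodule.coe_smul, smul_eq_mul, smul_eq_mul, ← map_mul, ← map_mul,
          MvPolynomial.monomial_mul, MvPolynomial.monomial_mul, ind_exch]
      rw [hI, mem_I'] at this
      intro β hβ
      have := this β hβ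
      rwa [MvPolynomial.coeff_sub, sub_eq_zero] at this)
    rw [Submodule.mem_span_pair]
    refine ⟨Ideal.Quotient.mk I C, Ideal.Quotient.mk I C', ?_⟩
    refine ext_gen _ Jbar hJb _ _ ?_
    rintro u ⟨_, ⟨A, hA, rfl⟩, hu⟩
    obtain rfl : ⟨_, hmem A hA⟩ = u := Subtype.ext hu
    rw [← hf A hA, LinearMap.add_apply, LinearMap.smul_apply, LinearMap.smul_apply, smul_eq_mul, smul_eq_mul,
      Submodule.subtype_apply]
    rcases id hA with ⟨s, hs, rfl⟩ | ⟨t, ht, rfl⟩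
    · rw [hφ1 _ _ (hP s hs) rfl, mul_zero, add_zero, ← map_mul]
      symm
      rw [Ideal.Quotient.eq, hI, mem_I']
      exact hC s hs
    · rw [hφ2 _ _ (hQ t ht) (by rw [← hz t ht]), ← hy t ht, ← map_mul, ← map_mul, ← map_add]
      symm
      rw [Ideal.Quotient.eq, hI, mem_I', ← sub_sub]
      exact hC' t ht
end

section
/- Let k be a field, d an even integer with d ≥ 4, and m an integer with d+1 < m; set a = (d+2)/2. In k[x_1,…,x_m,z,T] let Q = I_{a,1,m−1} + I_{a,2,m} + T·I_{a−1,2,m−1} + (zT − x_1x_m)·I_{a−2,3,m−2}, and set S = k[x_1,…,x_m,z,T]/Q. Then the image of z in S is a non-zero-divisor of S, and S/(z) is isomorphic as a k-algebra to k[x_1,…,x_{m+1}]/(I_{a,1,m} + I_{a,2,m+1}), which is the Stanley–Reisner ring k[Δ(d,m+1)] of the boundary complex of the d-dimensional cyclic polytope with m+1 vertices. -/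
set_option synthInstance.maxHeartbeats 1000000
set_option maxHeartbeats 1000000

namespace UnprojAux
open MvPolynomial

def G (a p q : ℕ) (t : ℕ → ℕ) : Prop :=
  p ≤ t 0 ∧ t (a - 1) ≤ q ∧ (∀ j, j + 1 < a → t j + 2 ≤ t (j + 1))

lemma G.lower {a p q : ℕ} {t : ℕ → ℕ} (h : G a p q t) : ∀ j, j < a → p + 2 * j ≤ t j := by
  intro j
  induction j with
  | zero => intro _; exact h.1
  | succ j ih =>
    intro hj
    have := ih (by omega)
    have := h.2.2 j hj
    omega

lemma G.upper {a p q : ℕ} {t : ℕ → ℕ} (h : G a p q t) :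
    ∀ i j, j + i + 1 = a → t j + 2 * i ≤ q := by
  intro i
  induction i with
  | zero =>
    intro j hj
    have := h.2.1
    have e : j = a - 1 := by omega
    subst e
    omega
  | succ i ih =>
    intro j hj
    have := ih (j + 1) (by omega)
    have := h.2.2 j (by omega)
    omega

lemma G.upper' {a p q : ℕ} {t : ℕ → ℕ} (h : G a p q t) (j : ℕ) (hj : j < a) :
    t j + 2 * (a - 1 - j) ≤ q := h.upper _ _ (by omega)

lemma G.mem {k : Type*} [Field k] {n a p q : ℕ} {t : ℕ → ℕ} (h : G a p q t) :
    ∏ j ∈ Finset.range a, Xv k n (t j) ∈ idealI k n a p q :=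
  Ideal.subset_span ⟨t, h.1, h.2.1, h.2.2, rfl⟩

lemma idealI_le {k : Type*} [Field k] {n a p q : ℕ} {J : Ideal (MvPolynomial (Fin n) k)}
    (H : ∀ t, G a p q t → ∏ j ∈ Finset.range a, Xv k n (t j) ∈ J) : idealI k n a p q ≤ J := by
  unfold idealI
  rw [Ideal.span_le]
  rintro _ ⟨t, h1, h2, h3, rfl⟩
  exact H t ⟨h1, h2, h3⟩

lemma idealI_mono {k : Type*} [Field k] {n a p q p' q' : ℕ} (hp : p' ≤ p) (hq : q ≤ q') :
    idealI k n a p q ≤ idealI k n a p' q' :=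
  idealI_le fun t h => G.mem ⟨hp.trans h.1, h.2.1.trans hq, h.2.2⟩

lemma map_idealI {k : Type*} [Field k] {n n' a p q : ℕ}
    (φ : MvPolynomial (Fin n) k →ₐ[k] MvPolynomial (Fin n') k)
    (H : ∀ t, p ≤ t → t ≤ q → φ (Xv k n t) = Xv k n' t) {x : MvPolynomial (Fin n) k}
    (hx : x ∈ idealI k n a p q) : φ x ∈ idealI k n' a p q := by
  have : idealI k n a p q ≤ (idealI k n' a p q).comap φ := by
    apply idealI_le
    intro t ht
    rw [Ideal.mem_comap, map_prod]
    have e : ∏ j ∈ Finset.range a, φ (Xv k n (t j)) = ∏ j ∈ Finset.range a, Xv k n' (t j) := by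
      apply Finset.prod_congr rfl
      intro j hj
      rw [Finset.mem_range] at hj
      have h1 := ht.lower j hj
      have h2 := ht.upper' j hj
      exact H _ (by omega) (by omega)
    rw [e]
    exact ht.mem
  exact this hx

noncomputable def psi (k : Type*) [Field k] (m : ℕ) :
    MvPolynomial (Fin (m + 2)) k →ₐ[k] MvPolynomial (Fin (m + 1)) k :=
  aeval fun i => if i.1 < m then Xv k (m + 1) (i.1 + 1) else if i.1 = m then 0
    else Xv k (m + 1) (m + 1)

noncomputable def sig (k : Type*) [Field k] (m : ℕ) :
    MvPolynomial (Fin (m + 1)) k →ₐ[k] MvPolynomial (Fin (m + 2)) k :=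
  aeval fun i => if i.1 < m then Xv k (m + 2) (i.1 + 1) else Xv k (m + 2) (m + 2)

lemma Xv_eq (k : Type*) [Field k] {n : ℕ} (i : Fin n) : Xv k n (i.1 + 1) = X i := by
  have := i.2
  rw [Xv, dif_pos ⟨by omega, by omega⟩]
  congr 1

lemma Xv_eq' (k : Type*) [Field k] {n t : ℕ} (h : 1 ≤ t) (h' : t ≤ n) :
    Xv k n t = X ⟨t - 1, by omega⟩ := by
  rw [Xv, dif_pos ⟨h, h'⟩]

lemma psi_x (k : Type*) [Field k] (m t : ℕ) (h1 : 1 ≤ t) (h2 : t ≤ m) :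
    psi k m (Xv k (m + 2) t) = Xv k (m + 1) t := by
  rw [Xv_eq' k h1 (by omega), psi, aeval_X, if_pos (by simp only; omega)]
  simp only
  congr 1; omega

lemma psi_z (k : Type*) [Field k] (m : ℕ) : psi k m (Xv k (m + 2) (m + 1)) = 0 := by
  rw [Xv_eq' k (by omega) (by omega), psi, aeval_X]
  simp

lemma psi_T (k : Type*) [Field k] (m : ℕ) :
    psi k m (Xv k (m + 2) (m + 2)) = Xv k (m + 1) (m + 1) := by
  rw [Xv_eq' k (by omega) (by omega), psi, aeval_X]
  simp

lemma sig_x (k : Type*) [Field k] (m t : ℕ) (h1 : 1 ≤ t) (h2 : t ≤ m) :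
    sig k m (Xv k (m + 1) t) = Xv k (m + 2) t := by
  rw [Xv_eq' k h1 (by omega), sig, aeval_X, if_pos (by simp only; omega)]
  simp only
  congr 1; omega

lemma sig_T (k : Type*) [Field k] (m : ℕ) :
    sig k m (Xv k (m + 1) (m + 1)) = Xv k (m + 2) (m + 2) := by
  rw [Xv_eq' k (by omega) (by omega), sig, aeval_X]
  simp

lemma psi_sig (k : Type*) [Field k] (m : ℕ) (f) : psi k m (sig k m f) = f := by
  have : (psi k m).comp (sig k m) = AlgHom.id k _ := by
    apply MvPolynomial.algHom_ext
    intro i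
    rw [← Xv_eq]
    rcases Nat.lt_or_ge i.1 m with h | h
    · simp [sig_x k m (i.1 + 1) (by omega) (by omega), psi_x k m (i.1 + 1) (by omega) (by omega)]
    · have : i.1 = m := by omega
      simp [this, sig_T, psi_T]
  exact DFunLike.congr_fun this f

noncomputable def ph (k : Type*) [Field k] (m : ℕ) :
    MvPolynomial (Fin (m + 2)) k →ₐ[k] MvPolynomial (Fin (m + 2)) k :=
  (sig k m).comp (psi k m)

lemma ph_x (k : Type*) [Field k] (m t : ℕ) (h1 : 1 ≤ t) (h2 : t ≤ m) :
    ph k m (Xv k (m + 2) t) = Xv k (m + 2) t := by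
  rw [ph, AlgHom.comp_apply, psi_x k m t h1 h2, sig_x k m t h1 h2]

lemma ph_z (k : Type*) [Field k] (m : ℕ) : ph k m (Xv k (m + 2) (m + 1)) = 0 := by
  rw [ph, AlgHom.comp_apply, psi_z, map_zero]

lemma ph_T (k : Type*) [Field k] (m : ℕ) :
    ph k m (Xv k (m + 2) (m + 2)) = Xv k (m + 2) (m + 2) := by
  rw [ph, AlgHom.comp_apply, psi_T, sig_T]

lemma ph_dec (k : Type*) [Field k] (m : ℕ) (f : MvPolynomial (Fin (m + 2)) k) :
    ∃ g, f = ph k m f + Xv k (m + 2) (m + 1) * g := by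
  induction f using MvPolynomial.induction_on with
  | C c => exact ⟨0, by rw [MvPolynomial.C_eq_algebraMap]; simp⟩
  | add p q hp hq =>
    obtain ⟨p', hp⟩ := hp
    obtain ⟨q', hq⟩ := hq
    refine ⟨p' + q', ?_⟩
    rw [map_add]
    linear_combination hp + hq
  | mul_X p i hp =>
    obtain ⟨p', hp⟩ := hp
    rw [← Xv_eq, map_mul]
    have hi := i.2
    rcases Nat.lt_trichotomy i.1 m with h | h | h
    · rw [ph_x k m _ (by omega) (by omega)]
      exact ⟨p' * Xv k (m + 2) (i.1 + 1), by linear_combination Xv k (m + 2) (i.1 + 1) * hp⟩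
    · rw [h, ph_z]
      exact ⟨p, by ring⟩
    · have : i.1 = m + 1 := by omega
      rw [this, ph_T]
      exact ⟨p' * Xv k (m + 2) (m + 2), by linear_combination Xv k (m + 2) (m + 2) * hp⟩

lemma ideal_dec (k : Type*) [Field k] (m : ℕ) (s : Set (MvPolynomial (Fin (m + 2)) k))
    (hs : ∀ x ∈ s, ph k m x = x) {x : MvPolynomial (Fin (m + 2)) k} (hx : x ∈ Ideal.span s) :
    ph k m x ∈ Ideal.span s ∧ ∃ x' ∈ Ideal.span s, x = ph k m x + Xv k (m + 2) (m + 1) * x' := by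
  induction hx using Submodule.span_induction with
  | mem x h =>
    rw [hs x h]
    exact ⟨Ideal.subset_span h, 0, zero_mem _, by simp⟩
  | zero => exact ⟨by simp, 0, zero_mem _, by simp⟩
  | add x y _ _ hx hy =>
    obtain ⟨h1, x', h2, h3⟩ := hx
    obtain ⟨h4, y', h5, h6⟩ := hy
    rw [map_add]
    exact ⟨add_mem h1 h4, x' + y', add_mem h2 h5, by linear_combination h3 + h6⟩
  | smul r x hx0 hx =>
    obtain ⟨h1, x', h2, h3⟩ := hx
    obtain ⟨r', hr⟩ := ph_dec k m r
    rw [smul_eq_mul, map_mul]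
    refine ⟨Ideal.mul_mem_left _ _ h1, r' * x + ph k m r * x',
      add_mem (Ideal.mul_mem_left _ _ hx0) (Ideal.mul_mem_left _ _ h2), ?_⟩
    linear_combination x * hr + ph k m r * h3

/-- exponent vectors -/
noncomputable def ev (n t : ℕ) : Fin n →₀ ℕ :=
  if h : 1 ≤ t ∧ t ≤ n then Finsupp.single ⟨t - 1, by omega⟩ 1 else 0

lemma ev_apply (n t : ℕ) (i : Fin n) : ev n t i = if t = i.1 + 1 then 1 else 0 := by
  have := i.2
  unfold ev
  split_ifs with h h' h'
  · subst h'; simp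
  · rw [Finsupp.single_apply, if_neg]
    intro h2
    have := congrArg Fin.val h2
    simp only at this
    omega
  · omega
  · rfl

lemma Xv_mon (k : Type*) [Field k] {n t : ℕ} (h : 1 ≤ t) (h' : t ≤ n) :
    Xv k n t = monomial (ev n t) 1 := by
  rw [Xv, ev, dif_pos ⟨h, h'⟩, dif_pos ⟨h, h'⟩, MvPolynomial.X]

noncomputable def ex (n a : ℕ) (t : ℕ → ℕ) : Fin n →₀ ℕ := ∑ j ∈ Finset.range a, ev n (t j)

lemma prod_mon (k : Type*) [Field k] {n a : ℕ} {t : ℕ → ℕ}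
    (h : ∀ j < a, 1 ≤ t j ∧ t j ≤ n) :
    ∏ j ∈ Finset.range a, Xv k n (t j) = monomial (ex n a t) 1 := by
  induction a with
  | zero => simp [ex]
  | succ a ih =>
    rw [Finset.prod_range_succ, ih (fun j hj => h j (by omega)),
      Xv_mon k (h a (by omega)).1 (h a (by omega)).2, monomial_mul, ex, ex,
      Finset.sum_range_succ, one_mul]

lemma ex_zero {n a : ℕ} {t : ℕ → ℕ} (i : Fin n) (h : ∀ j < a, t j ≠ i.1 + 1) :
    ex n a t i = 0 := by
  rw [ex, Finsupp.finsetSum_apply]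
  apply Finset.sum_eq_zero
  intro j hj
  rw [ev_apply, if_neg (h j (Finset.mem_range.1 hj))]

/-- exponents of the generators of the monomial part -/
def ES (m b : ℕ) : Set (Fin (m + 2) →₀ ℕ) :=
  {s | (∃ t, G (b + 3) 1 (m - 1) t ∧ s = ex (m + 2) (b + 3) t) ∨
    (∃ t, G (b + 3) 2 m t ∧ s = ex (m + 2) (b + 3) t) ∨
    (∃ t, G (b + 2) 2 (m - 1) t ∧ s = ev (m + 2) (m + 2) + ex (m + 2) (b + 2) t)}

noncomputable def MM (k : Type*) [Field k] (m b : ℕ) : Ideal (MvPolynomial (Fin (m + 2)) k) :=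
  Ideal.span ((fun s => monomial s (1 : k)) '' ES m b)

lemma M_eq (k : Type*) [Field k] (m b : ℕ) (hm : 2 * b + 6 ≤ m) :
    idealI k (m + 2) (b + 3) 1 (m - 1) + idealI k (m + 2) (b + 3) 2 m +
      Ideal.span {Xv k (m + 2) (m + 2)} * idealI k (m + 2) (b + 2) 2 (m - 1) = MM k m b := by
  apply le_antisymm
  · rw [Submodule.add_eq_sup, Submodule.add_eq_sup]
    refine sup_le (sup_le ?_ ?_) ?_
    · apply idealI_le
      intro t ht
      rw [prod_mon]
      · exact Ideal.subset_span ⟨_, Or.inl ⟨t, ht, rfl⟩, rfl⟩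
      · intro j hj
        have h1 := ht.lower j hj
        have h2 := ht.upper' j hj
        omega
    · apply idealI_le
      intro t ht
      rw [prod_mon]
      · exact Ideal.subset_span ⟨_, Or.inr (Or.inl ⟨t, ht, rfl⟩), rfl⟩
      · intro j hj
        have h1 := ht.lower j hj
        have h2 := ht.upper' j hj
        omega
    · unfold idealI
      rw [Ideal.span_mul_span', Ideal.span_le]
      rintro _ ⟨_, rfl, _, ⟨t, h1, h2, h3, rfl⟩, rfl⟩
      have ht : G (b + 2) 2 (m - 1) t := ⟨h1, h2, h3⟩
      simp only
      rw [prod_mon, Xv_mon k (by omega) (by omega), monomial_mul, one_mul]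
      · exact Ideal.subset_span ⟨_, Or.inr (Or.inr ⟨t, ht, rfl⟩), rfl⟩
      · intro j hj
        have h1 := ht.lower j hj
        have h2 := ht.upper' j hj
        omega
  · unfold MM
    rw [Ideal.span_le]
    rintro _ ⟨s, (⟨t, ht, rfl⟩ | ⟨t, ht, rfl⟩ | ⟨t, ht, rfl⟩), rfl⟩
    · simp only
      rw [← prod_mon]
      · exact Submodule.mem_sup_left (Submodule.mem_sup_left ht.mem)
      · intro j hj
        have h1 := ht.lower j hj
        have h2 := ht.upper' j hj
        omega
    · simp only
      rw [← prod_mon]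
      · exact Submodule.mem_sup_left (Submodule.mem_sup_right ht.mem)
      · intro j hj
        have h1 := ht.lower j hj
        have h2 := ht.upper' j hj
        omega
    · have : monomial (ev (m + 2) (m + 2) + ex (m + 2) (b + 2) t) (1 : k) =
        Xv k (m + 2) (m + 2) * ∏ j ∈ Finset.range (b + 2), Xv k (m + 2) (t j) := by
        rw [prod_mon, Xv_mon k (by omega) (by omega), monomial_mul, one_mul]
        intro j hj
        have h1 := ht.lower j hj
        have h2 := ht.upper' j hj
        omega
      simp only
      rw [this]
      exact Submodule.mem_sup_right
        (Ideal.mul_mem_mul (Ideal.mem_span_singleton_self _) ht.mem)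

lemma ES_colon (m b : ℕ) (hm : 2 * b + 6 ≤ m) (η s : Fin (m + 2) →₀ ℕ) (hs : s ∈ ES m b)
    (hle : s ≤ ev (m + 2) 1 + ev (m + 2) m + η) :
    ∃ s' ∈ ES m b, s' ≤ ev (m + 2) (m + 2) + η := by
  have key : ∀ (r : Fin (m + 2) →₀ ℕ), r ≤ s → (∀ i : Fin (m + 2), i.1 + 1 = 1 → r i = 0) →
      (∀ i : Fin (m + 2), i.1 + 1 = m → r i = 0) → r ≤ η := by
    intro r hr h1 h2 i
    by_cases e1 : i.1 + 1 = 1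
    · rw [h1 i e1]; exact Nat.zero_le _
    by_cases e2 : i.1 + 1 = m
    · rw [h2 i e2]; exact Nat.zero_le _
    have h3 := hr i
    have h4 := hle i
    rw [Finsupp.add_apply, Finsupp.add_apply, ev_apply, ev_apply, if_neg (Ne.symm e1),
      if_neg (Ne.symm e2)] at h4
    omega
  rcases hs with ⟨t, ht, rfl⟩ | ⟨t, ht, rfl⟩ | ⟨t, ht, rfl⟩
  · have ht' : G (b + 2) 2 (m - 1) (fun j => t (j + 1)) := by
      refine ⟨?_, ?_, ?_⟩
      · have := ht.lower 1 (by omega)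
        simp only [zero_add]; omega
      · exact ht.2.1
      · intro j hj
        exact ht.2.2 (j + 1) (by omega)
    refine ⟨_, Or.inr (Or.inr ⟨_, ht', rfl⟩), ?_⟩
    refine add_le_add le_rfl (key _ ?_ ?_ ?_)
    · rw [ex, ex, Finset.sum_range_succ' _ (b + 2)]
      exact le_self_add
    · intro i hi
      apply ex_zero
      intro j hj
      have := ht'.lower j hj
      omega
    · intro i hi
      apply ex_zero
      intro j hj
      have := ht'.upper' j hj
      omega
  · have ht' : G (b + 2) 2 (m - 1) t := by
      refine ⟨ht.1, ?_, ?_⟩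
      · have := ht.upper' (b + 2 - 1) (by omega)
        omega
      · intro j hj
        exact ht.2.2 j (by omega)
    refine ⟨_, Or.inr (Or.inr ⟨_, ht', rfl⟩), ?_⟩
    refine add_le_add le_rfl (key _ ?_ ?_ ?_)
    · rw [ex, ex, Finset.sum_range_succ _ (b + 2)]
      exact le_self_add
    · intro i hi
      apply ex_zero
      intro j hj
      have := ht'.lower j hj
      omega
    · intro i hi
      apply ex_zero
      intro j hj
      have := ht'.upper' j hj
      omega
  · refine ⟨_, Or.inr (Or.inr ⟨_, ht, rfl⟩), ?_⟩
    refine add_le_add le_rfl (key _ ?_ ?_ ?_)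
    · exact le_add_self
    · intro i hi
      apply ex_zero
      intro j hj
      have := ht.lower j hj
      omega
    · intro i hi
      apply ex_zero
      intro j hj
      have := ht.upper' j hj
      omega

lemma MM_colon (k : Type*) [Field k] (m b : ℕ) (hm : 2 * b + 6 ≤ m)
    (g : MvPolynomial (Fin (m + 2)) k)
    (hg : Xv k (m + 2) 1 * Xv k (m + 2) m * g ∈ MM k m b) :
    Xv k (m + 2) (m + 2) * g ∈ MM k m b := by
  unfold MM at *
  rw [Xv_mon k (t := 1) (by omega) (by omega), Xv_mon k (t := m) (by omega) (by omega),
    monomial_mul, one_mul, mem_ideal_span_monomial_image] at hg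
  rw [Xv_mon k (by omega) (by omega), mem_ideal_span_monomial_image]
  intro xi hxi
  rw [mem_support_iff, coeff_monomial_mul'] at hxi
  split_ifs at hxi with hle
  swap
  · exact absurd rfl hxi
  obtain ⟨η, rfl⟩ := exists_add_of_le hle
  rw [add_tsub_cancel_left, one_mul] at hxi
  obtain ⟨s, hs, hs'⟩ := hg (ev (m + 2) 1 + ev (m + 2) m + η) (by
    rw [mem_support_iff, coeff_monomial_mul, one_mul]
    exact hxi)
  exact ES_colon m b hm η s hs hs'

lemma ph_prod (k : Type*) [Field k] {m a p q : ℕ} {t : ℕ → ℕ} (h : G a p q t) (hp : 1 ≤ p)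
    (hq : q ≤ m) : ph k m (∏ j ∈ Finset.range a, Xv k (m + 2) (t j)) =
      ∏ j ∈ Finset.range a, Xv k (m + 2) (t j) := by
  rw [map_prod]
  apply Finset.prod_congr rfl
  intro j hj
  rw [Finset.mem_range] at hj
  have h1 := h.lower j hj
  have h2 := h.upper' j hj
  exact ph_x k m _ (by omega) (by omega)

lemma nzd (k : Type*) [Field k] (m b : ℕ) (hm : 2 * b + 6 ≤ m)
    (f : MvPolynomial (Fin (m + 2)) k)
    (hf : Xv k (m + 2) (m + 1) * f ∈ MM k m b +
      Ideal.span {Xv k (m + 2) (m + 1) * Xv k (m + 2) (m + 2) -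
        Xv k (m + 2) 1 * Xv k (m + 2) m} * idealI k (m + 2) (b + 1) 3 (m - 2)) :
    f ∈ MM k m b +
      Ideal.span {Xv k (m + 2) (m + 1) * Xv k (m + 2) (m + 2) -
        Xv k (m + 2) 1 * Xv k (m + 2) m} * idealI k (m + 2) (b + 1) 3 (m - 2) := by
  obtain ⟨μ, hμ, ν, hν, hsum⟩ := Submodule.mem_sup.1 hf
  obtain ⟨n, hn, rfl⟩ := Ideal.mem_span_singleton_mul.1 hν
  obtain ⟨hn1, n', hn', hne⟩ := ideal_dec k m _ (by
    rintro _ ⟨t, h1, h2, h3, rfl⟩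
    exact ph_prod k (a := b + 1) (p := 3) (q := m - 2) ⟨h1, h2, h3⟩ (by omega) (by omega)) hn
  obtain ⟨hμ1, μ', hμ', hμe⟩ := ideal_dec k m _ (by
    rintro _ ⟨s, (⟨t, ht, rfl⟩ | ⟨t, ht, rfl⟩ | ⟨t, ht, rfl⟩), rfl⟩
    · simp only
      rw [← prod_mon]
      · exact ph_prod k ht (by omega) (by omega)
      · intro j hj
        have h1 := ht.lower j hj
        have h2 := ht.upper' j hj
        omega
    · simp only
      rw [← prod_mon]
      · exact ph_prod k ht (by omega) (by omega)
      · intro j hj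
        have h1 := ht.lower j hj
        have h2 := ht.upper' j hj
        omega
    · have : monomial (ev (m + 2) (m + 2) + ex (m + 2) (b + 2) t) (1 : k) =
        Xv k (m + 2) (m + 2) * ∏ j ∈ Finset.range (b + 2), Xv k (m + 2) (t j) := by
        rw [prod_mon, Xv_mon k (by omega) (by omega), monomial_mul, one_mul]
        intro j hj
        have h1 := ht.lower j hj
        have h2 := ht.upper' j hj
        omega
      simp only
      rw [this, map_mul, ph_T, ph_prod k ht (by omega) (by omega)]) hμ
  have h0 := congrArg (ph k m) hsum
  simp only [map_add, map_mul, map_sub, ph_z, ph_T, ph_x k m 1 (by omega) (by omega),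
    ph_x k m m (by omega) (by omega)] at h0
  have hw : Xv k (m + 2) 1 * Xv k (m + 2) m * ph k m n ∈ MM k m b := by
    have : Xv k (m + 2) 1 * Xv k (m + 2) m * ph k m n = ph k m μ := by
      linear_combination -h0
    rw [this]; exact hμ1
  have hT := MM_colon k m b hm _ hw
  have hz : Xv k (m + 2) (m + 1) ≠ 0 := by
    rw [Xv_eq' k (by omega) (by omega)]; exact X_ne_zero _
  have hfe : f = (μ' + Xv k (m + 2) (m + 2) * ph k m n) +
      (Xv k (m + 2) (m + 1) * Xv k (m + 2) (m + 2) - Xv k (m + 2) 1 * Xv k (m + 2) m) * n' := by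
    apply mul_left_cancel₀ hz
    linear_combination -hsum + h0 + hμe +
      (Xv k (m + 2) (m + 1) * Xv k (m + 2) (m + 2) - Xv k (m + 2) 1 * Xv k (m + 2) m) * hne
  rw [hfe]
  exact Submodule.add_mem_sup (add_mem hμ' hT)
    (Ideal.mul_mem_mul (Ideal.mem_span_singleton_self _) hn')

lemma Q_le (k : Type*) [Field k] (m b : ℕ) (hm : 2 * b + 6 ≤ m) :
    idealI k (m + 2) (b + 3) 1 (m - 1) + idealI k (m + 2) (b + 3) 2 m +
      Ideal.span {Xv k (m + 2) (m + 2)} * idealI k (m + 2) (b + 2) 2 (m - 1) +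
      Ideal.span {Xv k (m + 2) (m + 1) * Xv k (m + 2) (m + 2) -
        Xv k (m + 2) 1 * Xv k (m + 2) m} * idealI k (m + 2) (b + 1) 3 (m - 2) ≤
    (idealI k (m + 1) (b + 3) 1 m + idealI k (m + 1) (b + 3) 2 (m + 1)).comap (psi k m) := by
  rw [Submodule.add_eq_sup, Submodule.add_eq_sup, Submodule.add_eq_sup]
  refine sup_le (sup_le (sup_le ?_ ?_) ?_) ?_
  · intro x hx
    exact Submodule.mem_sup_left (idealI_mono le_rfl (by omega)
      (map_idealI (psi k m) (fun t h1 _ => psi_x k m t h1 (by omega)) hx))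
  · intro x hx
    exact Submodule.mem_sup_left (idealI_mono (by omega) le_rfl
      (map_idealI (psi k m) (fun t h1 h2 => psi_x k m t (by omega) (by omega)) hx))
  · intro x hx
    obtain ⟨n, hn, rfl⟩ := Ideal.mem_span_singleton_mul.1 hx
    rw [Ideal.mem_comap, map_mul, psi_T]
    have hn' := map_idealI (psi k m) (fun t h1 h2 => psi_x k m t (by omega) (by omega)) hn
    apply Submodule.mem_sup_right
    generalize psi k m n = y at hn'
    have : idealI k (m + 1) (b + 2) 2 (m - 1) ≤ Submodule.comap
        (LinearMap.mulLeft _ (Xv k (m + 1) (m + 1))) (idealI k (m + 1) (b + 3) 2 (m + 1)) := by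
      apply idealI_le
      intro t ht
      rw [Submodule.mem_comap, LinearMap.mulLeft_apply]
      have h' : G (b + 3) 2 (m + 1) (fun j => if j < b + 2 then t j else m + 1) := by
        refine ⟨?_, ?_, ?_⟩
        · simpa using ht.1
        · simp
        · intro j hj
          simp only
          rw [if_pos (by omega)]
          split_ifs with h
          · exact ht.2.2 j h
          · have := ht.upper' j (by omega)
            omega
      have := h'.mem (k := k) (n := m + 1)
      rw [Finset.prod_range_succ, Finset.prod_congr rfl
        (g := fun j => Xv k (m + 1) (t j)), mul_comm] at this
      · simpa using this
      · intro j hj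
        rw [if_pos (Finset.mem_range.1 hj)]
    exact this hn'
  · intro x hx
    obtain ⟨n, hn, rfl⟩ := Ideal.mem_span_singleton_mul.1 hx
    rw [Ideal.mem_comap, map_mul, map_sub, map_mul, psi_z, map_mul,
      psi_x k m 1 (by omega) (by omega), psi_x k m m (by omega) (by omega)]
    have hn' := map_idealI (psi k m) (fun t h1 h2 => psi_x k m t (by omega) (by omega)) hn
    apply Submodule.mem_sup_left
    generalize psi k m n = y at hn'
    have : idealI k (m + 1) (b + 1) 3 (m - 2) ≤ Submodule.comap
        (LinearMap.mulLeft _ (Xv k (m + 1) 1 * Xv k (m + 1) m))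
        (idealI k (m + 1) (b + 3) 1 m) := by
      apply idealI_le
      intro t ht
      rw [Submodule.mem_comap, LinearMap.mulLeft_apply]
      have h' : G (b + 3) 1 m (fun j => if j = 0 then 1 else if j < b + 2 then t (j - 1) else m) := by
        refine ⟨?_, ?_, ?_⟩
        · simp
        · simp
        · intro j hj
          have h0 := ht.1
          simp only
          rcases j with _ | j
          · simp; omega
          · simp only [Nat.succ_ne_zero, if_false, if_pos (show j + 1 < b + 2 by omega)]
            split_ifs with h
            · exact ht.2.2 j (by omega)
            · have := ht.upper' j (by omega)
              simp only [Nat.add_sub_cancel]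
              omega
      have := h'.mem (k := k) (n := m + 1)
      rw [Finset.prod_range_succ, Finset.prod_range_succ', Finset.prod_congr rfl
        (g := fun j => Xv k (m + 1) (t j))] at this
      · simp at this
        convert this using 1
        ring
      · intro j hj
        rw [if_neg (by omega), if_pos (by have := Finset.mem_range.1 hj; omega)]
        simp
    have h2 := this hn'
    rw [Submodule.mem_comap, LinearMap.mulLeft_apply] at h2
    have e : (0 * psi k m (Xv k (m + 2) (m + 2)) - Xv k (m + 1) 1 * Xv k (m + 1) m) * y =
      -(Xv k (m + 1) 1 * Xv k (m + 1) m * y) := by ring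
    rw [e]
    exact neg_mem h2

lemma J_le (k : Type*) [Field k] (m b : ℕ) (hm : 2 * b + 6 ≤ m) :
    (idealI k (m + 1) (b + 3) 1 m + idealI k (m + 1) (b + 3) 2 (m + 1)) ≤
    ((idealI k (m + 2) (b + 3) 1 (m - 1) + idealI k (m + 2) (b + 3) 2 m +
      Ideal.span {Xv k (m + 2) (m + 2)} * idealI k (m + 2) (b + 2) 2 (m - 1) +
      Ideal.span {Xv k (m + 2) (m + 1) * Xv k (m + 2) (m + 2) -
        Xv k (m + 2) 1 * Xv k (m + 2) m} * idealI k (m + 2) (b + 1) 3 (m - 2)) ⊔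
      Ideal.span {Xv k (m + 2) (m + 1)}).comap (sig k m) := by
  have sp : ∀ (a p q : ℕ) (t : ℕ → ℕ), G a p q t → 1 ≤ p → q ≤ m →
      ∏ j ∈ Finset.range a, sig k m (Xv k (m + 1) (t j)) =
      ∏ j ∈ Finset.range a, Xv k (m + 2) (t j) := by
    intro a p q t h hp hq
    apply Finset.prod_congr rfl
    intro j hj
    rw [Finset.mem_range] at hj
    have h1 := h.lower j hj
    have h2 := h.upper' j hj
    exact sig_x k m _ (by omega) (by omega)
  simp only [Submodule.add_eq_sup]
  refine sup_le ?_ ?_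
  · apply idealI_le
    intro t ht
    rw [Ideal.mem_comap, map_prod, sp _ _ _ t ht (by omega) le_rfl]
    by_cases h0 : 2 ≤ t 0
    · exact Submodule.mem_sup_left (Submodule.mem_sup_left (Submodule.mem_sup_left
        (Submodule.mem_sup_right (G.mem ⟨h0, ht.2.1, ht.2.2⟩))))
    by_cases h1 : t (b + 3 - 1) ≤ m - 1
    · exact Submodule.mem_sup_left (Submodule.mem_sup_left (Submodule.mem_sup_left
        (Submodule.mem_sup_left (G.mem ⟨ht.1, h1, ht.2.2⟩))))
    have e0 : t 0 = 1 := by have := ht.1; omega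
    have e1 : t (b + 2) = m := by
      have := ht.2.1
      simp only [show b + 3 - 1 = b + 2 by omega] at *
      omega
    have h' : G (b + 1) 3 (m - 2) (fun j => t (j + 1)) := by
      refine ⟨?_, ?_, ?_⟩
      · have := ht.lower 1 (by omega)
        simp only [zero_add]; omega
      · have := ht.upper' (b + 1) (by omega)
        simp only [Nat.add_sub_cancel]; omega
      · intro j hj
        exact ht.2.2 (j + 1) (by omega)
    rw [Finset.prod_range_succ, Finset.prod_range_succ', e0, e1]
    have hm' := h'.mem (k := k) (n := m + 2)
    generalize ∏ j ∈ Finset.range (b + 1), Xv k (m + 2) (t (j + 1)) = g at hm'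
    have e : g * Xv k (m + 2) 1 * Xv k (m + 2) m =
      (Xv k (m + 2) (m + 1) * Xv k (m + 2) (m + 2) - Xv k (m + 2) 1 * Xv k (m + 2) m) * (-g) +
      Xv k (m + 2) (m + 1) * (Xv k (m + 2) (m + 2) * g) := by ring
    rw [e]
    exact Submodule.add_mem_sup (Submodule.mem_sup_right
      (Ideal.mul_mem_mul (Ideal.mem_span_singleton_self _) (neg_mem hm')))
      (Ideal.mul_mem_right _ _ (Ideal.mem_span_singleton_self _))
  · apply idealI_le
    intro t ht
    rw [Ideal.mem_comap, map_prod]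
    by_cases h1 : t (b + 3 - 1) ≤ m
    · have h' : G (b + 3) 2 m t := ⟨ht.1, h1, ht.2.2⟩
      rw [sp _ _ _ t h' (by omega) le_rfl]
      exact Submodule.mem_sup_left (Submodule.mem_sup_left (Submodule.mem_sup_left
        (Submodule.mem_sup_right h'.mem)))
    have e1 : t (b + 2) = m + 1 := by
      have := ht.2.1
      simp only [show b + 3 - 1 = b + 2 by omega] at *
      omega
    have h' : G (b + 2) 2 (m - 1) t := by
      refine ⟨ht.1, ?_, ?_⟩
      · have := ht.upper' (b + 2 - 1) (by omega)
        omega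
      · intro j hj
        exact ht.2.2 j (by omega)
    rw [Finset.prod_range_succ, e1, sp _ _ _ t h' (by omega) (by omega), sig_T,
      mul_comm (Finset.prod _ _)]
    exact Submodule.mem_sup_left (Submodule.mem_sup_left (Submodule.mem_sup_right
        (Ideal.mul_mem_mul (Ideal.mem_span_singleton_self _) h'.mem)))

end UnprojAux

open UnprojAux in
/-- Main theorem, `d` even case. Let `d ≥ 4` be even, `d + 1 < m`, `a = (d+2)/2`. In
`k[x_1,…,x_m,z,T]` (with `z, T` the last two variables) let
`Q = I_{a,1,m−1} + I_{a,2,m} + T·I_{a−1,2,m−1} + (zT − x_1x_m)·I_{a−2,3,m−2}` and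
`S = k[x_1,…,x_m,z,T]/Q`. Then the image of `z` in `S` is a non-zero-divisor, and
`S/(z) ≅ k[x_1,…,x_{m+1}]/(I_{a,1,m} + I_{a,2,m+1}) = k[Δ(d,m+1)]` as `k`-algebras. -/
theorem unprojection_cyclic_even (k : Type*) [Field k] (d m : ℕ)
    (hd : Even d) (hd4 : 4 ≤ d) (hm : d + 1 < m) (a : ℕ) (ha : a = (d + 2) / 2)
    (Q : Ideal (MvPolynomial (Fin (m + 2)) k))
    (hQ : Q = idealI k (m + 2) a 1 (m - 1) + idealI k (m + 2) a 2 m +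
      Ideal.span {Xv k (m + 2) (m + 2)} * idealI k (m + 2) (a - 1) 2 (m - 1) +
      Ideal.span {Xv k (m + 2) (m + 1) * Xv k (m + 2) (m + 2) -
        Xv k (m + 2) 1 * Xv k (m + 2) m} * idealI k (m + 2) (a - 2) 3 (m - 2)) :
    Ideal.Quotient.mk Q (Xv k (m + 2) (m + 1)) ∈
      nonZeroDivisors (MvPolynomial (Fin (m + 2)) k ⧸ Q) ∧
    Nonempty (((MvPolynomial (Fin (m + 2)) k ⧸ Q) ⧸
        Ideal.span {Ideal.Quotient.mk Q (Xv k (m + 2) (m + 1))}) ≃ₐ[k]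
      (MvPolynomial (Fin (m + 1)) k ⧸
        (idealI k (m + 1) a 1 m + idealI k (m + 1) a 2 (m + 1)))) := by
  obtain ⟨b, rfl⟩ : ∃ b, a = b + 3 := ⟨a - 3, by omega⟩
  have hmb : 2 * b + 6 ≤ m := by
    obtain ⟨c, hc⟩ := hd
    omega
  simp only [show b + 3 - 1 = b + 2 by omega, show b + 3 - 2 = b + 1 by omega] at hQ
  constructor
  · rw [mem_nonZeroDivisors_iff_right]
    intro x hx
    obtain ⟨f, rfl⟩ := Ideal.Quotient.mk_surjective x
    rw [← map_mul, Ideal.Quotient.eq_zero_iff_mem] at hx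
    rw [Ideal.Quotient.eq_zero_iff_mem]
    rw [M_eq k m b hmb] at hQ
    rw [hQ] at hx ⊢
    rw [mul_comm f] at hx
    exact nzd k m b hmb f hx
  · have h1 := Q_le k m b hmb
    have h2 := J_le k m b hmb
    rw [← hQ] at h1 h2
    set J := idealI k (m + 1) (b + 3) 1 m + idealI k (m + 1) (b + 3) 2 (m + 1) with hJ
    have hspan : Ideal.span {Ideal.Quotient.mk Q (Xv k (m + 2) (m + 1))} =
        (Ideal.span {Xv k (m + 2) (m + 1)}).map (Ideal.Quotient.mkₐ k Q) := by
      rw [Ideal.map_span, Set.image_singleton]; rfl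
    have hsurj : Function.Surjective ((Ideal.Quotient.mkₐ k J).comp (psi k m)) := by
      intro y
      obtain ⟨g, rfl⟩ := Ideal.Quotient.mk_surjective y
      exact ⟨sig k m g, by simp [psi_sig]⟩
    have hker : Q ⊔ Ideal.span {Xv k (m + 2) (m + 1)} =
        RingHom.ker ((Ideal.Quotient.mkₐ k J).comp (psi k m)) := by
      apply le_antisymm
      · refine sup_le ?_ ?_
        · intro x hx
          rw [RingHom.mem_ker]
          exact Ideal.Quotient.eq_zero_iff_mem.2 (h1 hx)
        · rw [Ideal.span_singleton_le_iff_mem, RingHom.mem_ker, AlgHom.comp_apply, psi_z, map_zero]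
      · intro x hx
        rw [RingHom.mem_ker] at hx
        have hx' : psi k m x ∈ J := Ideal.Quotient.eq_zero_iff_mem.1 hx
        have h3 : ph k m x ∈ Q ⊔ Ideal.span {Xv k (m + 2) (m + 1)} := h2 hx'
        obtain ⟨g, hg⟩ := ph_dec k m x
        rw [hg]
        exact add_mem h3 (Submodule.mem_sup_right
          (Ideal.mul_mem_right _ _ (Ideal.mem_span_singleton_self _)))
    exact ⟨((Ideal.quotientEquivAlgOfEq k hspan).trans
      (DoubleQuot.quotQuotEquivQuotSupₐ k Q _)).trans
      ((Ideal.quotientEquivAlgOfEq k hker).trans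
        (Ideal.quotientKerAlgEquivOfSurjective hsurj))⟩
end
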